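/- arXiv:math/0606566 — 2 statements merged into one kernel-verified Lean document; each statement's English description precedes it below -/
import Mathlib

section
/- For all n ≥ 0, the following identity holds: (q^2; q^2)_n / (1 - q^2)^n * (1 + qZ)^n = sum over k from 0 to n of the q^2-binomial coefficient (n choose k)_{q^2} times D_k^B(q, Z), where D_k^B(q,Z) is the generating polynomial for signed derangements of order k by (fmaj, neg). -/
open Finset

attribute [local instance] Classical.propDecidable

noncomputable section

/-- The word `x_1 x_2 ... x_n` (0-indexed) of a signed permutation of order `n`,
encoded as a pair (permutation, signs): `x_i = ±(σ(i)+1)`. -/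
def sword (n : ℕ) (w : Equiv.Perm (Fin n) × (Fin n → Bool)) : ℕ → ℤ :=
  fun i => if h : i < n then
      (if w.2 ⟨i, h⟩ then -(((w.1 ⟨i, h⟩ : ℕ) : ℤ) + 1) else (((w.1 ⟨i, h⟩ : ℕ) : ℤ) + 1))
    else 0

/-- number of negative letters -/
def negStat (n : ℕ) (x : ℕ → ℤ) : ℕ := ((Finset.range n).filter (fun i => x i < 0)).card

/-- number of positive fixed points (`x_i = i`, 1-indexed) -/
def fixPlus (n : ℕ) (x : ℕ → ℤ) : ℕ :=
  ((Finset.range n).filter (fun i => x i = (i : ℤ) + 1)).card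

/-- number of negative fixed points (`x_i = -i`, 1-indexed) -/
def fixMinus (n : ℕ) (x : ℕ → ℤ) : ℕ :=
  ((Finset.range n).filter (fun i => x i = -((i : ℤ) + 1))).card

/-- major index of the word -/
def majStat (n : ℕ) (x : ℕ → ℤ) : ℕ :=
  ∑ i ∈ Finset.range (n - 1), if x (i + 1) < x i then i + 1 else 0

/-- number of inversions of the word -/
def invStat (n : ℕ) (x : ℕ → ℤ) : ℕ :=
  ((Finset.range n ×ˢ Finset.range n).filter (fun p => p.1 < p.2 ∧ x p.2 < x p.1)).card

/-- length function `ℓ(w) = inv w + ∑_{x_i<0} |x_i|` -/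
def lenStat (n : ℕ) (x : ℕ → ℤ) : ℕ :=
  invStat n x + ∑ i ∈ Finset.range n, if x i < 0 then (x i).natAbs else 0

/-- flag-major index `fmaj = 2 maj + neg` -/
def fmajStat (n : ℕ) (x : ℕ → ℤ) : ℕ := 2 * majStat n x + negStat n x

/-- the word `x_0 ... x_{m-1}` has its leftmost trough at position `2k` (1-indexed):
`x_1 > x_2 > ... > x_{2k}` and `x_{2k} < x_{2k+1}` (with `x_{m+1} = ∞`). -/
def IsDesarAt (m k : ℕ) (x : ℕ → ℤ) : Prop :=
  1 ≤ k ∧ 2 * k ≤ m ∧ (∀ i, i + 1 < 2 * k → x (i + 1) < x i) ∧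
    (2 * k = m ∨ x (2 * k - 1) < x (2 * k))

/-- a word of length `m` is a desarrangement (empty word included) -/
def IsDesar (m : ℕ) (x : ℕ → ℤ) : Prop :=
  m = 0 ∨ ∃ k, IsDesarAt m k x

/-- the length of the longest right factor of the word of length `n`
which is a desarrangement -/
def dlen (n : ℕ) (x : ℕ → ℤ) : ℕ :=
  sSup {m | m ≤ n ∧ IsDesar m (fun i => x (n - m + i))}

/-- number of letters of `w^-` in the pixed factorization `w = w^- w^+ w^d` -/
def pixMinus (n : ℕ) (x : ℕ → ℤ) : ℕ :=
  ((Finset.range (n - dlen n x)).filter (fun i => x i < 0)).card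

/-- number of letters of `w^+` in the pixed factorization `w = w^- w^+ w^d` -/
def pixPlus (n : ℕ) (x : ℕ → ℤ) : ℕ :=
  ((Finset.range (n - dlen n x)).filter (fun i => 0 < x i)).card

/-- the number of derangements of an `m`-element set -/
def dnum (m : ℕ) : ℕ :=
  (Finset.univ.filter (fun σ : Equiv.Perm (Fin m) => ∀ i, σ i ≠ i)).card

/-- the word of an ordinary permutation of `{1, ..., m}` -/
def pword (m : ℕ) (σ : Equiv.Perm (Fin m)) : ℕ → ℤ :=
  fun i => if h : i < m then ((σ ⟨i, h⟩ : ℕ) : ℤ) + 1 else 0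

/-- the q-ascending factorial `(q;q)_m` -/
def qq {K : Type*} [CommRing K] (q : K) (m : ℕ) : K :=
  ∏ i ∈ Finset.range m, (1 - q ^ (i + 1))

/-- `D_m(q)`: generating polynomial for derangements of order `m` by major index -/
def Dmaj {K : Type*} [CommRing K] (q : K) (m : ℕ) : K :=
  ∑ σ ∈ Finset.univ.filter (fun σ : Equiv.Perm (Fin m) => ∀ i, σ i ≠ i),
    q ^ majStat m (pword m σ)

/-- `D_n^B(q,Z)`: generating polynomial for signed derangements of order `n`
(no positive fixed point) by `(fmaj, neg)`. -/
def DB {K : Type*} [CommRing K] (q Z : K) (n : ℕ) : K :=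
  ∑ w ∈ Finset.univ.filter
      (fun w : Equiv.Perm (Fin n) × (Fin n → Bool) => fixPlus n (sword n w) = 0),
    q ^ fmajStat n (sword n w) * Z ^ negStat n (sword n w)

/-! ### Basic facts on the major index -/

lemma majStat_succ (n : ℕ) (x : ℕ → ℤ) :
    majStat (n + 2) x = majStat (n + 1) x + if x (n + 1) < x n then n + 1 else 0 := by
  simp only [majStat, Nat.add_sub_cancel, show n + 2 - 1 = n + 1 from rfl, Finset.sum_range_succ]

lemma majStat_congr (n : ℕ) (x y : ℕ → ℤ)
    (h : ∀ i, i + 1 < n → (x (i + 1) < x i ↔ y (i + 1) < y i)) : majStat n x = majStat n y := by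
  unfold majStat
  refine Finset.sum_congr rfl fun i hi => ?_
  have hi' : i + 1 < n := by have := Finset.mem_range.1 hi; omega
  simp only [h i hi']

lemma majStat_congr' (n : ℕ) (x y : ℕ → ℤ)
    (h : ∀ i, i < n → x i = y i) : majStat n x = majStat n y :=
  majStat_congr n x y fun i hi => by rw [h i (by omega), h (i + 1) hi]

/-! ### Gaussian binomials -/

/-- Gaussian binomial coefficients, defined by the `q`-Pascal rule -/
def gb {K : Type*} [CommRing K] (t : K) : ℕ → ℕ → K
  | _, 0 => 1
  | 0, _ + 1 => 0
  | n + 1, k + 1 => gb t n k + t ^ (k + 1) * gb t n (k + 1)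

lemma gb_zero_right {K : Type*} [CommRing K] (t : K) (n : ℕ) : gb t n 0 = 1 := by
  cases n <;> rfl

lemma gb_succ {K : Type*} [CommRing K] (t : K) (n k : ℕ) :
    gb t (n + 1) (k + 1) = gb t n k + t ^ (k + 1) * gb t n (k + 1) := rfl

lemma gb_of_lt {K : Type*} [CommRing K] (t : K) (n : ℕ) : ∀ k, n < k → gb t n k = 0 := by
  induction n with
  | zero => intro k hk; obtain ⟨k, rfl⟩ : ∃ j, k = j + 1 := ⟨k - 1, by omega⟩; rfl
  | succ n ih =>
    intro k hk
    obtain ⟨k, rfl⟩ : ∃ j, k = j + 1 := ⟨k - 1, by omega⟩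
    rw [gb_succ, ih k (by omega), ih (k + 1) (by omega)]; ring

lemma gb_succ' {K : Type*} [CommRing K] (t : K) (n : ℕ) : ∀ k,
    gb t (n + 1) (k + 1) = t ^ (n - k) * gb t n k + gb t n (k + 1) := by
  induction n with
  | zero =>
    intro k
    rw [gb_succ, gb_of_lt t 0 (k + 1) (by omega)]
    rcases k with _ | k
    · simp
    · rw [gb_of_lt t 0 (k + 1) (by omega)]; ring
  | succ n ih =>
    intro k
    rcases k with _ | k
    · rw [gb_succ t (n + 1) 0, gb_zero_right, ih 0, gb_zero_right]
      have e : gb t (n + 1) 1 = 1 + t * gb t n 1 := by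
        rw [gb_succ, gb_zero_right]; ring
      have e2 := ih 0
      simp only [gb_zero_right, Nat.zero_add, Nat.sub_zero, mul_one] at e2 ⊢
      rw [e2] at e
      have : t ^ (n + 1) = t * t ^ n := by ring
      rw [this]
      linear_combination -e
    · rw [gb_succ t (n + 1) (k + 1)]
      rcases lt_or_ge n (k + 1) with h | h
      · rw [gb_of_lt t (n + 1) (k + 1 + 1) (by omega), show n + 1 - (k + 1) = 0 by omega]
        ring
      · have a1 := ih k
        have a2 := ih (k + 1)
        have b1 := gb_succ t n k
        have b2 := gb_succ t n (k + 1)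
        obtain ⟨r, rfl⟩ : ∃ r, n = k + 1 + r := ⟨n - (k + 1), by omega⟩
        rw [show k + 1 + r - k = r + 1 by omega] at a1
        rw [show k + 1 + r - (k + 1) = r by omega] at a2
        rw [show k + 1 + r + 1 - (k + 1) = r + 1 by omega]
        rw [a2]
        have c := b2
        rw [a2] at c
        have d := b1
        rw [a1] at d
        rw [b1]
        have : t ^ (k + 1 + 1) = t * t ^ (k + 1) := by ring
        have e3 : t ^ (r + 1) = t * t ^ r := by ring
        rw [this, e3] at *
        linear_combination -d - c

lemma gb_qq {K : Type*} [CommRing K] (t : K) (n : ℕ) : ∀ k ≤ n,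
    gb t n k * (qq t k * qq t (n - k)) = qq t n := by
  have qs : ∀ m, qq t (m + 1) = qq t m * (1 - t ^ (m + 1)) := fun m => Finset.prod_range_succ _ _
  have q0 : qq t 0 = 1 := rfl
  induction n with
  | zero => intro k hk; obtain rfl : k = 0 := by omega
            simp [gb_zero_right, q0]
  | succ n ih =>
    intro k hk
    rcases k with _ | k
    · simp [gb_zero_right, q0]
    · have a1 := ih k (by omega)
      rw [gb_succ, show n + 1 - (k + 1) = n - k by omega, qs n, qs k]
      rcases Nat.lt_or_ge n (k + 1) with h | h
      · obtain rfl : k = n := by omega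
        rw [gb_of_lt t k (k + 1) (by omega)]
        linear_combination (1 - t ^ (k + 1)) * a1
      · have a2 := ih (k + 1) h
        obtain ⟨r, rfl⟩ : ∃ r, n = k + 1 + r := ⟨n - (k + 1), by omega⟩
        rw [show k + 1 + r - k = r + 1 by omega, qs r] at a1 ⊢
        rw [show k + 1 + r - (k + 1) = r by omega, qs k] at a2
        have : t ^ (k + 1 + r + 1) = t ^ (k + 1) * t ^ (r + 1) := by ring
        rw [this]
        linear_combination (1 - t ^ (k + 1)) * a1 + t ^ (k + 1) * (1 - t ^ (r + 1)) * a2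

/-! ### Inserting zeros in a word -/

/-- the word obtained from `y` by putting its letters at the positions in `S`, zeros elsewhere -/
def insW (y : ℕ → ℤ) (S : Finset ℕ) : ℕ → ℤ :=
  fun i => if i ∈ S then y (S.filter (fun j => j < i)).card else 0

/-- generating function of zero-insertions followed by a letter `c` -/
def insG {K : Type*} [CommRing K] (t : K) (y : ℕ → ℤ) (N k : ℕ) (c : ℤ) : K :=
  ∑ S ∈ powersetCard k (range N), t ^ majStat (N + 1) (fun i => if i = N then c else insW y S i)

lemma sum_powersetCard_succ {K : Type*} [AddCommMonoid K] (N k : ℕ) (f : Finset ℕ → K) :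
    ∑ S ∈ powersetCard (k + 1) (range (N + 1)), f S
      = ∑ S ∈ powersetCard (k + 1) (range N), f S
        + ∑ S ∈ powersetCard k (range N), f (insert N S) := by
  rw [Finset.range_add_one, Finset.powersetCard_succ_insert (by simp), Finset.sum_union,
    Finset.sum_image]
  · intro a ha b hb hab
    rw [Finset.mem_coe, Finset.mem_powersetCard] at ha hb
    have ha' : N ∉ a := fun h => by simpa using ha.1 h
    have hb' : N ∉ b := fun h => by simpa using hb.1 h
    ext i
    have := congrArg (i ∈ ·) hab
    simp only [Finset.mem_insert, eq_iff_iff] at this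
    by_cases hi : i = N
    · subst hi; simp [ha', hb']
    · simpa [hi] using this
  · rw [Finset.disjoint_left]
    intro a ha hb
    simp only [Finset.mem_image, Finset.mem_powersetCard] at ha hb
    obtain ⟨b, _, rfl⟩ := hb
    have := ha.1 (Finset.mem_insert_self N b)
    simp at this

lemma insW_insert_lt (y : ℕ → ℤ) (N : ℕ) (S : Finset ℕ) (i : ℕ) (hi : i < N) :
    insW y (insert N S) i = insW y S i := by
  unfold insW
  have h1 : i ∈ insert N S ↔ i ∈ S := by simp; omega
  have h2 : (insert N S).filter (fun j => j < i) = S.filter (fun j => j < i) := by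
    ext j; simp only [Finset.mem_filter, Finset.mem_insert]
    constructor
    · rintro ⟨h | h, h'⟩
      · omega
      · exact ⟨h, h'⟩
    · rintro ⟨h, h'⟩; exact ⟨Or.inr h, h'⟩
  simp only [h1, h2]

lemma insW_insert_self (y : ℕ → ℤ) (N k : ℕ) (S : Finset ℕ) (hS : S ∈ powersetCard k (range N)) :
    insW y (insert N S) N = y k := by
  rw [Finset.mem_powersetCard] at hS
  unfold insW
  rw [if_pos (Finset.mem_insert_self N S)]
  congr 1
  rw [← hS.2]
  congr 1
  ext j; simp only [Finset.mem_filter, Finset.mem_insert]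
  constructor
  · rintro ⟨h | h, h'⟩
    · omega
    · exact h
  · intro h; exact ⟨Or.inr h, by simpa using hS.1 h⟩

lemma insW_top (y : ℕ → ℤ) (N k : ℕ) (S : Finset ℕ) (hS : S ∈ powersetCard k (range N)) :
    insW y S N = 0 := by
  rw [Finset.mem_powersetCard] at hS
  unfold insW
  rw [if_neg]
  intro h; simpa using hS.1 h

lemma insG_term (t : ℕ) (x : ℕ → ℤ) (N : ℕ) (c : ℤ) (ht : t = N + 1) :
    majStat (N + 2) (fun i => if i = t then c else x i)
      = majStat (N + 1) x + if c < x N then N + 1 else 0 := by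
  subst ht
  rw [majStat_succ]
  congr 1
  · apply majStat_congr'
    intro i hi
    rw [if_neg (by omega)]
  · simp

lemma insG_term0 {k N : ℕ} (y : ℕ → ℤ) (S : Finset ℕ) (c : ℤ)
    (hS : S ∈ powersetCard k (range N)) :
    majStat (N + 2) (fun i => if i = N + 1 then c else insW y S i)
      = majStat (N + 1) (fun i => if i = N then 0 else insW y S i) + if c < 0 then N + 1 else 0 := by
  rw [insG_term _ _ _ _ rfl, insW_top y N k S hS]
  congr 1
  apply majStat_congr'
  intro i _
  split_ifs with h
  · rw [h, insW_top y N k S hS]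
  · rfl

lemma insG_term1 {k N : ℕ} (y : ℕ → ℤ) (S : Finset ℕ) (c : ℤ)
    (hS : S ∈ powersetCard k (range N)) :
    majStat (N + 2) (fun i => if i = N + 1 then c else insW y (insert N S) i)
      = majStat (N + 1) (fun i => if i = N then y k else insW y S i)
        + if c < y k then N + 1 else 0 := by
  rw [insG_term _ _ _ _ rfl, insW_insert_self y N k S hS]
  congr 1
  apply majStat_congr'
  intro i _
  split_ifs with h
  · rw [h, insW_insert_self y N k S hS]
  · rw [insW_insert_lt]; omega

lemma insG_succ {K : Type*} [CommRing K] (t : K) (y : ℕ → ℤ) (N k : ℕ) (c : ℤ) :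
    insG t y (N + 1) (k + 1) c
      = insG t y N (k + 1) 0 * t ^ (if c < 0 then N + 1 else 0)
        + insG t y N k (y k) * t ^ (if c < y k then N + 1 else 0) := by
  unfold insG
  rw [sum_powersetCard_succ, Finset.sum_mul, Finset.sum_mul]
  congr 1
  · refine Finset.sum_congr rfl fun S hS => ?_
    rw [← pow_add, insG_term0 y S c hS]
  · refine Finset.sum_congr rfl fun S hS => ?_
    rw [← pow_add, insG_term1 y S c hS]

lemma insG_succ_zero {K : Type*} [CommRing K] (t : K) (y : ℕ → ℤ) (N : ℕ) (c : ℤ) :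
    insG t y (N + 1) 0 c = insG t y N 0 0 * t ^ (if c < 0 then N + 1 else 0) := by
  unfold insG
  rw [Finset.sum_mul]
  simp only [Finset.powersetCard_zero, Finset.sum_singleton]
  rw [← pow_add, insG_term0 (k := 0) y ∅ c (by simp)]

lemma insG_closed {K : Type*} [CommRing K] (t : K) (y : ℕ → ℤ) (hy : ∀ i, y i ≠ 0) (N : ℕ) :
    insG t y N 0 0 = 1 ∧
    (∀ k, insG t y N (k + 1) 0
        = t ^ majStat (k + 1) y * t ^ (if 0 < y k then k + 1 else 0) * gb t N (k + 1)) ∧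
    (∀ k, insG t y N k (y k)
        = t ^ majStat (k + 1) y * t ^ (if y k < 0 then N - k else 0) * gb t N k) := by
  induction N with
  | zero =>
    refine ⟨by simp [insG, majStat], fun k => ?_, fun k => ?_⟩
    · rw [gb_of_lt _ _ _ (by omega), insG, Finset.powersetCard_eq_empty.2 (by simp)]; simp
    · rcases k with _ | k
      · simp [insG, majStat, gb_zero_right]
      · rw [gb_of_lt _ _ _ (by omega), insG, Finset.powersetCard_eq_empty.2 (by simp)]; simp
  | succ N ih =>
    obtain ⟨h0, hB, hA⟩ := ih
    refine ⟨?_, fun k => ?_, fun k => ?_⟩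
    · rw [insG_succ_zero, h0]; simp
    · rw [insG_succ, hB, hA]
      rcases Nat.lt_or_ge N k with h | h
      · rw [gb_of_lt t N k h, gb_of_lt t N (k + 1) (by omega), gb_of_lt t (N + 1) (k + 1) (by omega)]
        ring
      · obtain ⟨r, rfl⟩ : ∃ r, N = k + r := ⟨N - k, by omega⟩
        have e := gb_succ' t (k + r) k
        rw [show k + r - k = r by omega] at e ⊢
        rcases lt_or_gt_of_ne (hy k) with h | h
        · simp only [h, if_true, h.not_gt, if_false, lt_irrefl, e]; ring
        · simp only [h, if_true, h.not_gt, if_false, lt_irrefl, e]; ring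
    · rcases k with _ | k
      · rw [insG_succ_zero, h0]
        simp [gb_zero_right, majStat]
      · rw [insG_succ, hB, hA, majStat_succ]
        rcases Nat.lt_or_ge N k with h | h
        · rw [gb_of_lt t N k h, gb_of_lt t N (k + 1) (by omega),
            gb_of_lt t (N + 1) (k + 1) (by omega)]
          ring
        · obtain ⟨r, rfl⟩ : ∃ r, N = k + r := ⟨N - k, by omega⟩
          have e1 := gb_succ t (k + r) k
          have e2 := gb_succ' t (k + r) k
          rw [show k + r - k = r by omega] at e2 ⊢
          rw [show k + r + 1 - (k + 1) = r by omega]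
          rcases lt_or_gt_of_ne (hy k) with h | h <;> rcases lt_or_gt_of_ne (hy (k + 1)) with h' | h'
          · by_cases hd : y (k + 1) < y k
            · simp only [h, h', hd, if_true, h.not_gt, if_false, e2]; ring
            · simp only [h, h', hd, if_true, h.not_gt, if_false, e1]; ring
          · have hd : ¬ y (k + 1) < y k := by omega
            simp only [h, hd, if_true, h.not_gt, h'.not_gt, if_false, e2]; ring
          · have hd : y (k + 1) < y k := by omega
            simp only [h, h', hd, if_true, h.not_gt, if_false, e1]; ring
          · by_cases hd : y (k + 1) < y k
            · simp only [h, hd, if_true, h.not_gt, h'.not_gt, if_false, e2]; ring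
            · simp only [h, hd, if_true, h.not_gt, h'.not_gt, if_false, e1]; ring

lemma ins_total {K : Type*} [CommRing K] (t : K) (y : ℕ → ℤ) (hy : ∀ i, y i ≠ 0) (N k : ℕ) :
    ∑ S ∈ powersetCard k (range N), t ^ majStat N (insW y S) = t ^ majStat k y * gb t N k := by
  rcases N with _ | N
  · rcases k with _ | k
    · simp [majStat, gb_zero_right]
    · rw [gb_of_lt _ _ _ (by omega), Finset.powersetCard_eq_empty.2 (by simp)]; simp
  · obtain ⟨h0, hB, hA⟩ := insG_closed t y hy N
    have top0 : ∀ k, ∑ S ∈ powersetCard k (range N), t ^ majStat (N + 1) (insW y S)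
        = insG t y N k 0 := by
      intro k
      refine Finset.sum_congr rfl fun S hS => ?_
      congr 1
      apply majStat_congr'
      intro i _
      split_ifs with h
      · rw [h, insW_top y N k S hS]
      · rfl
    rcases k with _ | k
    · have := top0 0
      rw [h0] at this
      simpa [gb_zero_right, majStat] using this
    · have top1 : ∑ S ∈ powersetCard k (range N), t ^ majStat (N + 1) (insW y (insert N S))
          = insG t y N k (y k) := by
        refine Finset.sum_congr rfl fun S hS => ?_
        congr 1
        apply majStat_congr'
        intro i _
        split_ifs with h
        · rw [h, insW_insert_self y N k S hS]
        · rw [insW_insert_lt]; omega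
      rw [sum_powersetCard_succ, top0, top1, hB, hA]
      rcases lt_or_gt_of_ne (hy k) with h | h
      · rw [gb_succ']
        simp only [h, if_true, h.not_gt, if_false]; ring
      · rw [gb_succ]
        simp only [h, if_true, h.not_gt, if_false]; ring

/-! ### The major index on permutations -/

/-- word of a permutation followed by a letter `c - 1/2` (all letters are doubled) -/
def permV (n : ℕ) (σ : Equiv.Perm (Fin n)) (c : ℕ) : ℕ → ℤ :=
  fun i => if h : i < n then 2 * ((σ ⟨i, h⟩ : ℕ) : ℤ) + 1 else 2 * (c : ℤ)

/-- append the letter `j` to the permutation `τ` -/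
def appendPerm (n : ℕ) (p : Fin (n + 1) × Equiv.Perm (Fin n)) : Equiv.Perm (Fin (n + 1)) :=
  ((finSuccEquiv' (Fin.last n)).trans (Equiv.optionCongr p.2)).trans (finSuccEquiv' p.1).symm

lemma appendPerm_last (n : ℕ) (p : Fin (n + 1) × Equiv.Perm (Fin n)) :
    appendPerm n p (Fin.last n) = p.1 := by
  simp [appendPerm]

lemma appendPerm_castSucc (n : ℕ) (p : Fin (n + 1) × Equiv.Perm (Fin n)) (i : Fin n) :
    appendPerm n p i.castSucc = p.1.succAbove (p.2 i) := by
  have h : i.castSucc = (Fin.last n).succAbove i := by simp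
  rw [h]
  simp only [appendPerm, Equiv.trans_apply, finSuccEquiv'_succAbove]
  simp

lemma appendPerm_bijective (n : ℕ) : Function.Bijective (appendPerm n) := by
  rw [Fintype.bijective_iff_injective_and_card]
  constructor
  · rintro ⟨j, τ⟩ ⟨j', τ'⟩ h
    have h1 : j = j' := by
      have := congrArg (fun σ => σ (Fin.last n)) h
      simpa [appendPerm_last] using this
    subst h1
    congr 1
    ext i
    have := congrArg (fun σ => σ i.castSucc) h
    simp only [appendPerm_castSucc] at this
    have := Fin.succAbove_right_injective this
    rw [this]
  · simp [Fintype.card_perm, Nat.factorial_succ]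

lemma permV_append (n : ℕ) (j : Fin (n + 1)) (τ : Equiv.Perm (Fin n)) (c : ℕ) :
    majStat (n + 2) (permV (n + 1) (appendPerm n (j, τ)) c)
      = majStat (n + 1) (permV n τ j) + if c ≤ (j : ℕ) then n + 1 else 0 := by
  have hl : permV (n + 1) (appendPerm n (j, τ)) c n = 2 * (j : ℕ) + 1 := by
    simp only [permV, Nat.lt_succ_self, dif_pos]
    have := appendPerm_last n (j, τ)
    simp only [Fin.last] at this
    simp [this]
  have hi : ∀ i (h : i < n), permV (n + 1) (appendPerm n (j, τ)) c i
      = 2 * ((j.succAbove (τ ⟨i, h⟩) : ℕ) : ℤ) + 1 := by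
    intro i h
    simp only [permV, dif_pos (show i < n + 1 by omega)]
    have := appendPerm_castSucc n (j, τ) ⟨i, h⟩
    simp only [Fin.castSucc_mk] at this
    simp [this]
  rw [majStat_succ]
  congr 1
  · apply majStat_congr
    intro i h
    rcases Nat.lt_or_ge (i + 1) n with h' | h'
    · rw [hi i (by omega), hi (i + 1) h']
      simp only [permV, h', dif_pos, (show i < n by omega)]
      have := Fin.succAbove_lt_succAbove_iff (p := j) (i := τ ⟨i + 1, h'⟩) (j := τ ⟨i, by omega⟩)
      rw [Fin.lt_def, Fin.lt_def] at this
      omega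
    · obtain rfl : n = i + 1 := by omega
      rw [hi i (by omega), hl]
      simp only [permV, (show i < i + 1 by omega), dif_pos, lt_irrefl, dif_neg, not_false_eq_true]
      have := Fin.lt_succAbove_iff_le_castSucc j (τ ⟨i, by omega⟩)
      rw [Fin.lt_def, Fin.le_def] at this
      simp only [Fin.val_castSucc] at this
      omega
  · rw [hl]
    simp only [permV, lt_irrefl, dif_neg, not_false_eq_true]
    have : (2 * (c : ℤ) < 2 * ((j : ℕ) : ℤ) + 1) ↔ c ≤ (j : ℕ) := by omega
    simp only [this]

/-- `[n]_t!` -/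
def qfact {K : Type*} [CommRing K] (t : K) (n : ℕ) : K :=
  ∏ i ∈ range n, ∑ j ∈ range (i + 1), t ^ j

lemma geom_aux {K : Type*} [CommRing K] (t : K) (n c : ℕ) (hc : c ≤ n + 1) :
    ∑ j ∈ range (n + 1), t ^ (n - j) * t ^ (if c ≤ j then n + 1 else 0)
      = t ^ (n + 1 - c) * ∑ j ∈ range (n + 1), t ^ j := by
  obtain ⟨r, hr⟩ : ∃ r, n + 1 = c + r := ⟨n + 1 - c, by omega⟩
  rw [hr, Finset.sum_range_add, Finset.sum_range_add, mul_add, show c + r - c = r by omega]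
  congr 1
  · rw [← Finset.sum_range_reflect (fun j => t ^ j), Finset.mul_sum]
    refine Finset.sum_congr rfl fun j hj => ?_
    have := Finset.mem_range.1 hj
    rw [if_neg (by omega), ← pow_add, ← pow_add]
    congr 1; omega
  · rw [← Finset.sum_range_reflect (fun j => t ^ (c + j)), Finset.mul_sum]
    refine Finset.sum_congr rfl fun j hj => ?_
    have := Finset.mem_range.1 hj
    rw [if_pos (by omega), ← pow_add, ← pow_add]
    congr 1; omega

lemma maj_last {K : Type*} [CommRing K] (t : K) (n : ℕ) : ∀ c ≤ n,
    ∑ σ : Equiv.Perm (Fin n), t ^ majStat (n + 1) (permV n σ c) = t ^ (n - c) * qfact t n := by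
  induction n with
  | zero => intro c hc; simp [majStat, qfact]
  | succ n ih =>
    intro c hc
    rw [← (appendPerm_bijective n).sum_comp, Fintype.sum_prod_type]
    simp only [permV_append, pow_add, ← Finset.sum_mul]
    have : ∀ j : Fin (n + 1), (∑ τ : Equiv.Perm (Fin n), t ^ majStat (n + 1) (permV n τ j))
        = t ^ (n - (j : ℕ)) * qfact t n := fun j => ih j (by omega)
    simp only [this]
    rw [Fin.sum_univ_eq_sum_range (fun j => t ^ (n - j) * qfact t n * t ^ (if c ≤ j then n + 1 else 0))]
    have e := geom_aux t n c hc
    rw [show qfact t (n + 1) = qfact t n * ∑ j ∈ range (n + 1), t ^ j from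
      Finset.prod_range_succ _ _, mul_left_comm, ← e, Finset.mul_sum]
    refine Finset.sum_congr rfl fun j _ => by ring

/-- extend a finite word by zeros -/
def extW (n : ℕ) (f : Fin n → ℤ) : ℕ → ℤ := fun i => if h : i < n then f ⟨i, h⟩ else 0

lemma macMahon {K : Type*} [CommRing K] (t : K) (n : ℕ) (f : Fin n → ℤ)
    (hf : Function.Injective f) :
    ∑ σ : Equiv.Perm (Fin n), t ^ majStat n (extW n (fun i => f (σ i))) = qfact t n := by
  have hm : StrictMono (f ∘ Tuple.sort f) :=
    (Tuple.monotone_sort f).strictMono_of_injective (hf.comp (Tuple.sort f).injective)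
  have key := maj_last t n n le_rfl
  rw [Nat.sub_self, pow_zero, one_mul] at key
  rw [← key, ← Equiv.sum_comp (Equiv.mulLeft (Tuple.sort f))]
  refine Finset.sum_congr rfl fun σ _ => ?_
  congr 1
  have : majStat (n + 1) (permV n σ n) = majStat n (permV n σ n) := by
    rcases n with _ | n
    · simp [majStat]
    · rw [majStat_succ, if_neg]; rfl
      simp only [permV, lt_irrefl, dif_neg, not_false_eq_true, Nat.lt_succ_self, dif_pos]
      have := (σ ⟨n, by omega⟩).isLt
      push_cast
      omega
  rw [this]
  apply majStat_congr
  intro i hi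
  simp only [extW, permV, hi, dif_pos, (show i < n by omega), Equiv.coe_mulLeft,
    Equiv.Perm.mul_apply]
  have := hm.lt_iff_lt (a := σ ⟨i + 1, hi⟩) (b := σ ⟨i, by omega⟩)
  simp only [Function.comp] at this
  rw [this, Fin.lt_def]
  omega

/-! ### Signed permutations -/

lemma sword_apply (n : ℕ) (w : Equiv.Perm (Fin n) × (Fin n → Bool)) (i : Fin n) :
    sword n w i = if w.2 i then -(((w.1 i : ℕ) : ℤ) + 1) else (((w.1 i : ℕ) : ℤ) + 1) := by
  simp [sword, i.isLt]

lemma sword_neg_iff (n : ℕ) (w : Equiv.Perm (Fin n) × (Fin n → Bool)) (i : Fin n) :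
    sword n w i < 0 ↔ w.2 i = true := by
  rw [sword_apply]
  split_ifs with h
  · exact iff_of_true (by omega) h
  · exact iff_of_false (by omega) h

lemma card_filter_range (n : ℕ) (p : ℕ → Prop) [DecidablePred p] :
    ((range n).filter p).card = (univ.filter (fun i : Fin n => p i)).card := by
  rw [← Finset.card_map Fin.valEmbedding]
  congr 1
  ext i
  simp only [Finset.mem_filter, Finset.mem_range, Finset.mem_map, Finset.mem_univ, true_and,
    Fin.valEmbedding_apply]
  constructor
  · rintro ⟨h, hp⟩; exact ⟨⟨i, h⟩, hp, rfl⟩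
  · rintro ⟨j, hp, rfl⟩; exact ⟨j.isLt, hp⟩

lemma negStat_sword (n : ℕ) (w : Equiv.Perm (Fin n) × (Fin n → Bool)) :
    negStat n (sword n w) = (univ.filter (fun i : Fin n => w.2 i = true)).card := by
  unfold negStat
  rw [card_filter_range]
  simp only [sword_neg_iff]

/-- non (positive-)fixed positions -/
def nfSet (n : ℕ) (w : Equiv.Perm (Fin n) × (Fin n → Bool)) : Finset (Fin n) :=
  univ.filter (fun i => ¬ (sword n w i = ((i : ℕ) : ℤ) + 1))

lemma fixed_iff (n : ℕ) (w : Equiv.Perm (Fin n) × (Fin n → Bool)) (i : Fin n) :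
    sword n w i = ((i : ℕ) : ℤ) + 1 ↔ (w.1 i = i ∧ w.2 i = false) := by
  rw [sword_apply, Fin.ext_iff]
  cases h : w.2 i
  · simp
  · simp; omega

lemma fixPlus_eq_zero (n : ℕ) (w : Equiv.Perm (Fin n) × (Fin n → Bool)) :
    fixPlus n (sword n w) = 0 ↔ ∀ i : Fin n, sword n w i ≠ ((i : ℕ) : ℤ) + 1 := by
  unfold fixPlus
  rw [card_filter_range, Finset.card_eq_zero, Finset.filter_eq_empty_iff]
  simp

lemma sum_signs {K : Type*} [CommRing K] (u : K) (n : ℕ) :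
    ∑ η : Fin n → Bool, u ^ (univ.filter (fun i : Fin n => η i = true)).card = (1 + u) ^ n := by
  have h := Finset.prod_univ_sum (fun _ : Fin n => (univ : Finset Bool))
    (fun _ b => if b = true then u else 1)
  simp only [Fintype.univ_bool, Finset.prod_const, Finset.card_univ, Fintype.card_fin] at h
  have e : (∑ b ∈ ({true, false} : Finset Bool), if b = true then u else 1) = 1 + u := by
    rw [Finset.sum_pair (by simp)]; simp [add_comm]
  rw [← e]
  convert h.symm using 1
  · refine Finset.sum_congr ?_ fun η _ => ?_
    · ext η; simp
    · rw [Finset.prod_ite]; simp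

lemma signed_total {K : Type*} [CommRing K] (t u : K) (n : ℕ) :
    ∑ w : Equiv.Perm (Fin n) × (Fin n → Bool),
      t ^ majStat n (sword n w) * u ^ negStat n (sword n w) = qfact t n * (1 + u) ^ n := by
  rw [Fintype.sum_prod_type]
  have h1 : ∀ σ : Equiv.Perm (Fin n), (∑ ε : Fin n → Bool,
      t ^ majStat n (sword n (σ, ε)) * u ^ negStat n (sword n (σ, ε)))
      = ∑ η : Fin n → Bool, t ^ majStat n (extW n (fun i => (fun v : Fin n =>
          if η v then -(((v : ℕ) : ℤ) + 1) else ((v : ℕ) : ℤ) + 1) (σ i)))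
          * u ^ (univ.filter (fun i : Fin n => η i = true)).card := by
    intro σ
    rw [← Equiv.sum_comp (Equiv.arrowCongr σ.symm (Equiv.refl Bool))]
    refine Finset.sum_congr rfl fun η _ => ?_
    congr 2
    rw [negStat_sword]
    refine Finset.card_bij (fun i _ => σ i) ?_ ?_ ?_
    · intro i hi; simpa [Equiv.arrowCongr] using hi
    · intro i _ j _ h; exact σ.injective h
    · intro v hv; exact ⟨σ.symm v, by simpa [Equiv.arrowCongr] using hv, by simp⟩
  simp only [h1]
  rw [Finset.sum_comm, ← sum_signs u n, Finset.mul_sum]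
  refine Finset.sum_congr rfl fun η _ => ?_
  rw [← Finset.sum_mul]
  congr 1
  refine macMahon t n (fun v : Fin n =>
    if η v then -(((v : ℕ) : ℤ) + 1) else ((v : ℕ) : ℤ) + 1) ?_
  intro a b hab
  simp only at hab
  apply Fin.ext
  split_ifs at hab <;> omega

/-! ### The derangement part -/

/-- the signed permutation with non-fixed positions `S` and derangement part `d` -/
def mkW {n k : ℕ} {S : Finset (Fin n)} (e : Fin k ≃o S)
    (d : Equiv.Perm (Fin k) × (Fin k → Bool)) : Equiv.Perm (Fin n) × (Fin n → Bool) :=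
  (d.1.extendDomain (p := fun i => i ∈ S) e.toEquiv,
    fun i => if h : i ∈ S then d.2 (e.symm ⟨i, h⟩) else false)

section
variable {n k : ℕ} {S : Finset (Fin n)} (e : Fin k ≃o S)
  (d : Equiv.Perm (Fin k) × (Fin k → Bool))

lemma mkW_fst (j : Fin k) : (mkW e d).1 (e j) = e (d.1 j) := by
  have := Equiv.Perm.extendDomain_apply_image (p := fun i => i ∈ S) d.1 e.toEquiv j
  simpa [mkW] using this

lemma mkW_snd (j : Fin k) : (mkW e d).2 (e j) = d.2 j := by
  simp [mkW]

lemma mkW_fst_not (i : Fin n) (h : i ∉ S) : (mkW e d).1 i = i := by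
  simp only [mkW]
  exact Equiv.Perm.extendDomain_apply_not_subtype _ _ h

lemma mkW_snd_not (i : Fin n) (h : i ∉ S) : (mkW e d).2 i = false := by
  simp [mkW, h]

lemma exists_idx (i : Fin n) (h : i ∈ S) : ∃ j, (e j : Fin n) = i := ⟨e.symm ⟨i, h⟩, by simp⟩

lemma e_lt (j j' : Fin k) : ((e j : Fin n) : ℕ) < ((e j' : Fin n) : ℕ) ↔ (j : ℕ) < j' := by
  rw [← Fin.lt_def, ← Fin.lt_def, Subtype.coe_lt_coe, e.lt_iff_lt]

lemma nf_mkW (hd : ∀ i : Fin k, sword k d i ≠ ((i : ℕ) : ℤ) + 1) : nfSet n (mkW e d) = S := by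
  ext i
  simp only [nfSet, Finset.mem_filter, Finset.mem_univ, true_and]
  rw [fixed_iff]
  by_cases h : i ∈ S
  · obtain ⟨j, rfl⟩ := exists_idx e i h
    simp only [h, iff_true]
    rw [mkW_fst, mkW_snd]
    have := hd j
    rw [Ne, fixed_iff] at this
    intro h'
    exact this ⟨e.injective (Subtype.ext h'.1), h'.2⟩
  · simp [h, mkW_fst_not, mkW_snd_not]

lemma mkW_injective : Function.Injective (mkW e) := by
  intro d d' h
  have h1 : ∀ j, d.1 j = d'.1 j := by
    intro j
    have := congrArg (fun w => w.1 (e j)) h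
    simp only [mkW_fst] at this
    exact e.injective (Subtype.ext this)
  have h2 : ∀ j, d.2 j = d'.2 j := by
    intro j
    have := congrArg (fun w => w.2 (e j)) h
    simpa only [mkW_snd] using this
  exact Prod.ext (Equiv.ext h1) (funext h2)

lemma mkW_surj (w : Equiv.Perm (Fin n) × (Fin n → Bool)) (hw : nfSet n w = S) :
    ∃ d, (∀ i : Fin k, sword k d i ≠ ((i : ℕ) : ℤ) + 1) ∧ mkW e d = w := by
  have hfix : ∀ i, i ∉ S → w.1 i = i ∧ w.2 i = false := by
    intro i hi
    rw [← fixed_iff]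
    rw [← hw] at hi
    simpa [nfSet] using hi
  have hS : ∀ i, w.1 i ∈ S ↔ i ∈ S := by
    intro i
    constructor
    · intro h
      by_contra h'
      rw [(hfix i h').1] at h
      exact h' h
    · intro h
      by_contra h'
      have := w.1.injective (hfix _ h').1
      rw [this] at h'
      exact h' h
  let d : Equiv.Perm (Fin k) × (Fin k → Bool) :=
    ((e.toEquiv.trans (w.1.subtypePerm hS)).trans e.toEquiv.symm, fun j => w.2 (e j))
  have hd1 : ∀ j, (e (d.1 j) : Fin n) = w.1 (e j) := by
    intro j
    simp [d]
  have hmk : mkW e d = w := by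
    apply Prod.ext
    · ext1 i
      by_cases h : i ∈ S
      · obtain ⟨j, rfl⟩ := exists_idx e i h
        rw [mkW_fst, hd1]
      · rw [mkW_fst_not e d i h, (hfix i h).1]
    · funext i
      by_cases h : i ∈ S
      · obtain ⟨j, rfl⟩ := exists_idx e i h
        rw [mkW_snd]
      · rw [mkW_snd_not e d i h, (hfix i h).2]
  refine ⟨d, ?_, hmk⟩
  intro j hj
  rw [fixed_iff] at hj
  have hm : (e j : Fin n) ∈ nfSet n w := by rw [hw]; exact (e j).2
  simp only [nfSet, Finset.mem_filter, Finset.mem_univ, true_and] at hm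
  rw [fixed_iff, ← hd1, hj.1] at hm
  exact hm ⟨rfl, hj.2⟩

lemma negStat_mkW : negStat n (sword n (mkW e d)) = negStat k (sword k d) := by
  rw [negStat_sword, negStat_sword]
  symm
  refine Finset.card_bij (fun j _ => (e j : Fin n)) ?_ ?_ ?_
  · intro j hj
    simp only [Finset.mem_filter, Finset.mem_univ, true_and] at hj ⊢
    rw [mkW_snd, hj]
  · intro a _ b _ h; exact e.injective (Subtype.ext h)
  · intro i hi
    simp only [Finset.mem_filter, Finset.mem_univ, true_and] at hi
    by_cases h : i ∈ S
    · obtain ⟨j, rfl⟩ := exists_idx e i h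
      rw [mkW_snd] at hi
      exact ⟨j, by simp [hi], rfl⟩
    · rw [mkW_snd_not e d i h] at hi; simp at hi

/-- auxiliary word with nonzero letters, positive at excedances, negative elsewhere -/
def yword (k : ℕ) (d : Equiv.Perm (Fin k) × (Fin k → Bool)) : ℕ → ℤ :=
  fun i => if i < k then
    (if (i : ℤ) + 1 < sword k d i then sword k d i + (k + 1) else sword k d i - (k + 1)) else 1

lemma sword_bound (j : Fin k) : -(k : ℤ) ≤ sword k d j ∧ sword k d j ≤ k := by
  rw [sword_apply]
  have := (d.1 j).isLt
  split_ifs <;> omega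

lemma yword_ne (i : ℕ) : yword k d i ≠ 0 := by
  unfold yword
  split_ifs with h h'
  · have := sword_bound d ⟨i, h⟩
    simp only at this
    omega
  · have := sword_bound d ⟨i, h⟩
    simp only at this
    omega
  · simp

lemma yword_pos (j : Fin k) : 0 < yword k d j ↔ ((j : ℕ) : ℤ) + 1 < sword k d j := by
  have := sword_bound d j
  simp only [yword, j.isLt, if_true]
  split_ifs with h
  · simp only [h, iff_true]; omega
  · simp only [h, iff_false]; omega

lemma yword_lt (hd : ∀ i : Fin k, sword k d i ≠ ((i : ℕ) : ℤ) + 1) (i : ℕ) (hi : i + 1 < k) :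
    yword k d (i + 1) < yword k d i ↔ sword k d (i + 1) < sword k d i := by
  have a1 := sword_bound d ⟨i, by omega⟩
  have a2 := sword_bound d ⟨i + 1, hi⟩
  have b1 := hd ⟨i, by omega⟩
  have b2 := hd ⟨i + 1, hi⟩
  simp only [yword, hi, (show i < k by omega), if_true] at *
  push_cast at *
  split_ifs <;> omega

lemma majStat_yword (hd : ∀ i : Fin k, sword k d i ≠ ((i : ℕ) : ℤ) + 1) :
    majStat k (yword k d) = majStat k (sword k d) :=
  majStat_congr _ _ _ fun i hi => yword_lt d hd i hi

lemma insW_idx (y : ℕ → ℤ) (j : Fin k) :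
    insW y (S.map Fin.valEmbedding) ((e j : Fin n) : ℕ) = y j := by
  unfold insW
  have hm : ((e j : Fin n) : ℕ) ∈ S.map Fin.valEmbedding :=
    Finset.mem_map_of_mem Fin.valEmbedding (e j).2
  rw [if_pos hm]
  congr 1
  have : (j : ℕ) = (univ.filter (fun l : Fin k => l < j)).card := by
    rw [show (univ.filter (fun l : Fin k => l < j)) = Finset.Iio j by ext; simp, Fin.card_Iio]
  rw [this]
  symm
  refine Finset.card_bij (fun l _ => ((e l : Fin n) : ℕ)) ?_ ?_ ?_
  · intro l hl
    simp only [Finset.mem_filter, Finset.mem_univ, true_and] at hl ⊢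
    exact ⟨Finset.mem_map_of_mem Fin.valEmbedding (e l).2, (e_lt e l j).2 hl⟩
  · intro a _ b _ h; exact e.injective (Subtype.ext (Fin.ext h))
  · intro i hi
    simp only [Finset.mem_filter, Finset.mem_map, Fin.valEmbedding_apply] at hi
    obtain ⟨⟨i, hiS, rfl⟩, hlt⟩ := hi
    obtain ⟨l, rfl⟩ := exists_idx e i hiS
    exact ⟨l, by simpa using (e_lt e l j).1 hlt, rfl⟩

lemma insW_not (y : ℕ → ℤ) (i : Fin n) (h : i ∉ S) : insW y (S.map Fin.valEmbedding) i = 0 := by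
  unfold insW
  rw [if_neg]
  intro h'
  obtain ⟨x, hx, hxi⟩ := Finset.mem_map.1 h'
  have : x = i := Fin.ext hxi
  exact h (this ▸ hx)

lemma sword_mkW (j : Fin k) : sword n (mkW e d) ((e j : Fin n) : ℕ)
    = if d.2 j then -((((e (d.1 j) : Fin n) : ℕ) : ℤ) + 1)
      else ((((e (d.1 j) : Fin n) : ℕ) : ℤ) + 1) := by
  rw [sword_apply, mkW_fst, mkW_snd]

lemma sword_mkW_not (i : Fin n) (h : i ∉ S) : sword n (mkW e d) i = (i : ℕ) + 1 := by
  rw [sword_apply, mkW_fst_not e d i h, mkW_snd_not e d i h]; simp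

lemma sword_mkW_ne (j : Fin k) (i : Fin n) (h : i ∉ S) :
    sword n (mkW e d) ((e j : Fin n) : ℕ) ≠ (i : ℕ) + 1 := by
  rw [sword_mkW]
  split_ifs
  · omega
  · intro h'
    apply h
    have : i = e (d.1 j) := Fin.ext (by omega)
    rw [this]; exact (e _).2

lemma sword_mkW_lt (j j' : Fin k) :
    sword n (mkW e d) ((e j : Fin n) : ℕ) < sword n (mkW e d) ((e j' : Fin n) : ℕ)
      ↔ sword k d j < sword k d j' := by
  rw [sword_mkW, sword_mkW, sword_apply, sword_apply]
  have h1 := e_lt e (d.1 j) (d.1 j')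
  have h2 := e_lt e (d.1 j') (d.1 j)
  split_ifs <;> omega

lemma sword_mkW_exc (j : Fin k) :
    (((e j : Fin n) : ℕ) : ℤ) + 1 < sword n (mkW e d) ((e j : Fin n) : ℕ)
      ↔ ((j : ℕ) : ℤ) + 1 < sword k d j := by
  rw [sword_mkW, sword_apply]
  have h1 := e_lt e j (d.1 j)
  split_ifs <;> omega

lemma majStat_mkW (hd : ∀ i : Fin k, sword k d i ≠ ((i : ℕ) : ℤ) + 1) :
    majStat n (sword n (mkW e d)) = majStat n (insW (yword k d) (S.map Fin.valEmbedding)) := by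
  apply majStat_congr
  intro i hi
  obtain ⟨a, ha⟩ : ∃ a : Fin n, (a : ℕ) = i := ⟨⟨i, by omega⟩, rfl⟩
  obtain ⟨b, hb⟩ : ∃ b : Fin n, (b : ℕ) = i + 1 := ⟨⟨i + 1, hi⟩, rfl⟩
  rw [← hb, ← ha]
  by_cases hA : a ∈ S <;> by_cases hB : b ∈ S
  · obtain ⟨j, rfl⟩ := exists_idx e a hA
    obtain ⟨j', rfl⟩ := exists_idx e b hB
    have hjj : (j' : ℕ) = j + 1 := by
      have h1 := (e_lt e j j').1 (by omega)
      by_contra hne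
      have hlt : (j : ℕ) + 1 < k := by have := j'.isLt; omega
      have h2 := (e_lt e j ⟨j + 1, hlt⟩).2 (by simp)
      have h3 := (e_lt e ⟨j + 1, hlt⟩ j').2 (by simp only; omega)
      omega
    rw [sword_mkW_lt, insW_idx, insW_idx, hjj]
    exact (yword_lt d hd j (by have := j'.isLt; omega)).symm
  · obtain ⟨j, rfl⟩ := exists_idx e a hA
    rw [insW_idx, insW_not _ b hB, yword_pos, ← sword_mkW_exc e, sword_mkW_not e d b hB]
    have := sword_mkW_ne e d j b hB
    omega
  · obtain ⟨j, rfl⟩ := exists_idx e b hB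
    rw [insW_idx, insW_not _ a hA, sword_mkW_not e d a hA]
    have h1 := sword_mkW_ne e d j a hA
    have h2 := yword_pos d j
    rw [← sword_mkW_exc e] at h2
    have h3 := yword_ne d (j : ℕ)
    have h4 : sword n (mkW e d) ((e j : Fin n) : ℕ) ≠ (((e j : Fin n) : ℕ) : ℤ) + 1 := by
      have := nf_mkW e d hd
      have hB' : (e j : Fin n) ∈ nfSet n (mkW e d) := by rw [this]; exact hB
      simpa [nfSet] using hB'
    omega
  · rw [insW_not _ a hA, insW_not _ b hB, sword_mkW_not e d a hA, sword_mkW_not e d b hB]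
    omega

end

/-- generating polynomial of signed derangements -/
lemma fiber_sum {K : Type*} [CommRing K] (t u : K) (n k : ℕ) (S : Finset (Fin n))
    (hS : S.card = k) :
    ∑ w ∈ univ.filter (fun w : Equiv.Perm (Fin n) × (Fin n → Bool) => nfSet n w = S),
      t ^ majStat n (sword n w) * u ^ negStat n (sword n w)
    = ∑ d ∈ univ.filter (fun d : Equiv.Perm (Fin k) × (Fin k → Bool) =>
        fixPlus k (sword k d) = 0),
      t ^ majStat n (insW (yword k d) (S.map Fin.valEmbedding)) * u ^ negStat k (sword k d) := by
  symm
  let e : Fin k ≃o S := S.orderIsoOfFin hS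
  refine Finset.sum_bij (fun d _ => mkW e d) ?_ ?_ ?_ ?_
  · intro d hd
    simp only [Finset.mem_filter, Finset.mem_univ, true_and, fixPlus_eq_zero] at hd ⊢
    exact nf_mkW e d hd
  · intro a _ b _ h; exact mkW_injective e h
  · intro w hw
    simp only [Finset.mem_filter, Finset.mem_univ, true_and] at hw
    obtain ⟨d, h1, h2⟩ := mkW_surj e w hw
    refine ⟨d, ?_, h2⟩
    simp only [Finset.mem_filter, Finset.mem_univ, true_and, fixPlus_eq_zero]
    exact h1
  · intro d hd
    simp only [Finset.mem_filter, Finset.mem_univ, true_and, fixPlus_eq_zero] at hd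
    rw [negStat_mkW, majStat_mkW e d hd]

lemma signed_decomp {K : Type*} [CommRing K] (t u : K) (n : ℕ) :
    ∑ w : Equiv.Perm (Fin n) × (Fin n → Bool),
      t ^ majStat n (sword n w) * u ^ negStat n (sword n w)
    = ∑ k ∈ range (n + 1), gb t n k *
        ∑ d ∈ univ.filter (fun d : Equiv.Perm (Fin k) × (Fin k → Bool) =>
          fixPlus k (sword k d) = 0), t ^ majStat k (sword k d) * u ^ negStat k (sword k d) := by
  rw [← Finset.sum_fiberwise_of_maps_to (s := univ) (t := (univ : Finset (Fin n)).powerset)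
    (g := nfSet n) (by simp)]
  rw [Finset.sum_powerset]
  simp only [Finset.card_univ, Fintype.card_fin]
  refine Finset.sum_congr rfl fun k _ => ?_
  have h1 : ∀ S ∈ powersetCard k (univ : Finset (Fin n)), _ = _ :=
    fun S hS => fiber_sum t u n k S (Finset.mem_powersetCard.1 hS).2
  rw [Finset.sum_congr rfl h1, Finset.sum_comm, Finset.mul_sum]
  refine Finset.sum_congr rfl fun d hd => ?_
  simp only [Finset.mem_filter, Finset.mem_univ, true_and, fixPlus_eq_zero] at hd
  have h2 := ins_total t (yword k d) (yword_ne d) n k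
  have hr : range n = (univ : Finset (Fin n)).map Fin.valEmbedding := by
    ext i
    simp only [Finset.mem_range, Finset.mem_map, Finset.mem_univ, true_and, Fin.valEmbedding_apply]
    exact ⟨fun h => ⟨⟨i, h⟩, rfl⟩, fun ⟨j, hj⟩ => hj ▸ j.isLt⟩
  rw [hr, Finset.powersetCard_map, Finset.sum_map, majStat_yword d hd] at h2
  rw [← Finset.sum_mul, ← mul_assoc, mul_comm (gb t n k), ← h2]
  rfl

theorem stmt12 (K : Type*) [Field K] (q Z : K) (n : ℕ)
    (h1 : (1 : K) - q ^ 2 ≠ 0) (h2 : ∀ m ≤ n, qq (q ^ 2) m ≠ 0) :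
    qq (q ^ 2) n / (1 - q ^ 2) ^ n * (1 + q * Z) ^ n
      = ∑ k ∈ Finset.range (n + 1),
          (qq (q ^ 2) n / (qq (q ^ 2) k * qq (q ^ 2) (n - k))) * DB q Z k := by
  have hL : qq (q ^ 2) n / (1 - q ^ 2) ^ n = qfact (q ^ 2) n := by
    rw [div_eq_iff (pow_ne_zero _ h1)]
    unfold qq qfact
    rw [← Finset.card_range n, ← Finset.prod_const, Finset.card_range, ← Finset.prod_mul_distrib]
    exact Finset.prod_congr rfl fun i _ => (geom_sum_mul_neg (q ^ 2) (i + 1)).symm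
  rw [hL, ← signed_total, signed_decomp]
  refine Finset.sum_congr rfl fun k hk => ?_
  have hk' : k ≤ n := by have := Finset.mem_range.1 hk; omega
  congr 1
  · rw [eq_div_iff (mul_ne_zero (h2 k hk') (h2 (n - k) (by omega)))]
    exact gb_qq _ n k hk'
  · unfold DB
    refine Finset.sum_congr rfl fun d _ => ?_
    unfold fmajStat
    rw [pow_add, pow_mul, mul_pow]; ring
end
end

section
/- The major-index generating polynomial D_n(q) for derangements satisfies: D_0(q) = 1 and for n ≥ 1, (q;q)_n / (1-q)^n = sum over k from 0 to n of the q-binomial coefficient (n choose k)_q times D_k(q). -/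
open Finset

attribute [local instance] Classical.propDecidable

noncomputable section

def Cmp {n : ℕ} (σ : Equiv.Perm (Fin n)) (a : Fin n → ℕ) : Prop :=
  ∀ x y, x < y → a y ≤ a x ∧ (a x = a y → σ x < σ y)

def typ {n : ℕ} (σ : Equiv.Perm (Fin n)) (x : Fin n) : ℕ :=
  if σ x < x then 0 else if σ x = x then 1 else 2

lemma Cmp.anti {n : ℕ} {σ : Equiv.Perm (Fin n)} {a : Fin n → ℕ} (h : Cmp σ a) {x y : Fin n}
    (hxy : x ≤ y) : a y ≤ a x := by
  rcases hxy.lt_or_eq with h1 | h1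
  · exact (h x y h1).1
  · rw [h1]

lemma Cmp.bad {n : ℕ} {σ : Equiv.Perm (Fin n)} {a : Fin n → ℕ} (h : Cmp σ a) :
    ∀ (d : ℕ) (x y : Fin n), (y : ℕ) - x ≤ d → x < y → a x = a y → x ≤ σ x → σ y ≤ y →
      (x < σ x ∨ σ y < y) → False := by
  intro d
  induction d with
  | zero => intro x y hd hxy; exfalso; have : (x : ℕ) < y := hxy; omega
  | succ d ih =>
    intro x y hd hxy ha hx hy hor
    have h1 := (h x y hxy).2 ha
    have e1 : a (σ x) = a x := by
      have := h.anti hx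
      have := h.anti h1.le
      have := h.anti hy
      omega
    have e2 : a (σ y) = a x := by
      have := h.anti hx
      have := h.anti h1.le
      have := h.anti hy
      omega
    have g1 : x < σ x → σ x < σ (σ x) := fun hh => (h _ _ hh).2 e1.symm
    have g2 : σ y < y → σ (σ y) < σ y := fun hh => (h _ _ hh).2 (by omega)
    refine ih (σ x) (σ y) ?_ h1 (by omega) ?_ ?_ ?_
    · have q1 : (x : ℕ) ≤ σ x := hx
      have q2 : (σ y : ℕ) ≤ y := hy
      have q3 : (σ x : ℕ) < σ y := h1
      rcases hor with h5 | h5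
      · have : (x : ℕ) < σ x := h5
        omega
      · have : (σ y : ℕ) < y := h5
        omega
    · rcases hx.lt_or_eq with h5 | h5
      · exact (g1 h5).le
      · rw [← h5]; exact h5.le
    · rcases hy.lt_or_eq with h5 | h5
      · exact (g2 h5).le
      · rw [h5]; exact h5.le
    · rcases hor with h5 | h5
      · exact Or.inl (g1 h5)
      · exact Or.inr (g2 h5)

lemma Cmp.typ_le {n : ℕ} {σ : Equiv.Perm (Fin n)} {a : Fin n → ℕ} (h : Cmp σ a) {x y : Fin n}
    (hxy : x < y) (ha : a x = a y) : typ σ x ≤ typ σ y := by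
  by_contra hc
  have := h.bad _ x y le_rfl hxy ha
  unfold typ at hc
  grind

/-- key order -/
def klt (v t i v' t' i' : ℕ) : Prop := v' < v ∨ (v = v' ∧ (t < t' ∨ (t = t' ∧ i < i')))

lemma Cmp.key {n : ℕ} {σ : Equiv.Perm (Fin n)} {a : Fin n → ℕ} (h : Cmp σ a) {x y : Fin n}
    (hxy : x < y) : klt (a x) (typ σ x) x (a y) (typ σ y) y := by
  have h1 := h.anti hxy.le
  have h2 := h.typ_le hxy
  have : (x : ℕ) < y := hxy
  unfold klt
  omega

structure Rl {k j n : ℕ} (τ : Equiv.Perm (Fin k)) (b : Fin k → ℕ) (μ : Fin j → ℕ)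
    (σ : Equiv.Perm (Fin n)) (a : Fin n → ℕ) (e : Fin k ⊕ Fin j ≃ Fin n) : Prop where
  ml : StrictMono (fun x => e (Sum.inl x))
  mr : StrictMono (fun x => e (Sum.inr x))
  sl : ∀ x, σ (e (Sum.inl x)) = e (Sum.inl (τ x))
  sr : ∀ x, σ (e (Sum.inr x)) = e (Sum.inr x)
  al : ∀ x, a (e (Sum.inl x)) = b x
  ar : ∀ x, a (e (Sum.inr x)) = μ x

def sv {k j : ℕ} (b : Fin k → ℕ) (μ : Fin j → ℕ) : Fin k ⊕ Fin j → ℕ := Sum.elim b μ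
def st {k j : ℕ} (τ : Equiv.Perm (Fin k)) : Fin k ⊕ Fin j → ℕ := Sum.elim (typ τ) (fun _ => 1)
def si {k j : ℕ} : Fin k ⊕ Fin j → ℕ := Sum.elim (fun x => (x : ℕ)) (fun x => (x : ℕ))

def skey {k j : ℕ} (τ : Equiv.Perm (Fin k)) (b : Fin k → ℕ) (μ : Fin j → ℕ)
    (z : Fin k ⊕ Fin j) : ℕᵒᵈ ×ₗ (ℕ ×ₗ ℕ) :=
  toLex (OrderDual.toDual (sv b μ z), toLex (st τ z, si z))

lemma skey_lt {k j : ℕ} (τ : Equiv.Perm (Fin k)) (b : Fin k → ℕ) (μ : Fin j → ℕ)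
    (z z' : Fin k ⊕ Fin j) : skey τ b μ z < skey τ b μ z' ↔
      klt (sv b μ z) (st τ z) (si z) (sv b μ z') (st τ z') (si z') := by
  unfold skey klt
  rw [Prod.Lex.toLex_lt_toLex, Prod.Lex.toLex_lt_toLex]
  simp

lemma skey_inj {k j : ℕ} (τ : Equiv.Perm (Fin k)) (hτ : ∀ i, τ i ≠ i) (b : Fin k → ℕ)
    (μ : Fin j → ℕ) : Function.Injective (skey τ b μ) := by
  intro z z' h
  have h2 : sv b μ z = sv b μ z' ∧ st τ z = st τ z' ∧ si z = si z' := by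
    simpa [skey] using h
  obtain ⟨-, h3, h4⟩ := h2
  have key : ∀ x, typ τ x ≠ 1 := by intro x; have := hτ x; unfold typ; grind
  rcases z with z | z <;> rcases z' with z' | z' <;> simp [st, si] at h3 h4
  · rw [Fin.ext h4]
  · exact absurd h3 (key _)
  · exact absurd h3.symm (key _)
  · rw [Fin.ext h4]

lemma exists_sort {α β : Type*} [Fintype α] [LinearOrder β] (f : α → β)
    (hf : Function.Injective f) (n : ℕ) (hn : Fintype.card α = n) :
    ∃ e : α ≃ Fin n, ∀ z z', e z < e z' ↔ f z < f z' := by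
  let _ : LinearOrder α := LinearOrder.lift' f hf
  exact ⟨(Fintype.orderIsoFinOfCardEq α hn).symm.toEquiv,
    fun z z' => (Fintype.orderIsoFinOfCardEq α hn).symm.lt_iff_lt⟩

lemma Rl.key {k j n : ℕ} {τ : Equiv.Perm (Fin k)} {b : Fin k → ℕ} {μ : Fin j → ℕ}
    {σ : Equiv.Perm (Fin n)} {a : Fin n → ℕ} {e : Fin k ⊕ Fin j ≃ Fin n}
    (h : Rl τ b μ σ a e) (hτ : ∀ i, τ i ≠ i) (hc : Cmp σ a) (z z' : Fin k ⊕ Fin j) :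
    e z < e z' ↔ skey τ b μ z < skey τ b μ z' := by
  have main : ∀ z z', e z < e z' → skey τ b μ z < skey τ b μ z' := by
    intro z z' hz
    have hk := hc.key hz
    rw [skey_lt]
    have hv : ∀ z, a (e z) = sv b μ z := by
      rintro (x | x)
      · exact h.al x
      · exact h.ar x
    have ht : ∀ z, typ σ (e z) = st τ z := by
      rintro (x | x)
      · simp only [st, Sum.elim_inl, typ, h.sl]
        have : e (Sum.inl (τ x)) < e (Sum.inl x) ↔ τ x < x := h.ml.lt_iff_lt
        simp [this]
      · simp [st, typ, h.sr]
    rw [hv, hv, ht, ht] at hk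
    unfold klt at hk ⊢
    rcases hk with hk | ⟨h1, hk | ⟨h2, hk⟩⟩
    · exact Or.inl hk
    · exact Or.inr ⟨h1, Or.inl hk⟩
    · refine Or.inr ⟨h1, Or.inr ⟨h2, ?_⟩⟩
      have key : ∀ x, typ τ x ≠ 1 := by intro x; have := hτ x; unfold typ; grind
      rcases z with z | z <;> rcases z' with z' | z' <;> simp [st, si] at h2 ⊢
      · exact h.ml.lt_iff_lt.1 hz
      · exact absurd h2 (key _)
      · exact absurd h2.symm (key _)
      · exact h.mr.lt_iff_lt.1 hz
  refine ⟨main z z', fun hh => ?_⟩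
  by_contra hcon
  rcases (not_lt.1 hcon).lt_or_eq with h1 | h1
  · exact absurd (main _ _ h1) hh.asymm
  · rw [e.injective h1] at hh; exact lt_irrefl _ hh

lemma Rl.e_unique {k j n : ℕ} {τ : Equiv.Perm (Fin k)} {b : Fin k → ℕ} {μ : Fin j → ℕ}
    {σ σ' : Equiv.Perm (Fin n)} {a a' : Fin n → ℕ} {e e' : Fin k ⊕ Fin j ≃ Fin n}
    (h : Rl τ b μ σ a e) (h' : Rl τ b μ σ' a' e') (hτ : ∀ i, τ i ≠ i)
    (hc : Cmp σ a) (hc' : Cmp σ' a') : e = e' := by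
  have hm : StrictMono (e.symm.trans e') := by
    intro x y hxy
    simp only [Equiv.trans_apply]
    rw [h'.key hτ hc', ← h.key hτ hc]
    simpa using hxy
  have : (e.symm.trans e' : Fin n → Fin n) = id := by
    apply (StrictMono.range_inj hm strictMono_id).1
    rw [(e.symm.trans e').surjective.range_eq]; simp
  ext z
  have := congrFun this (e z)
  simp at this
  rw [this]

lemma Rl.σa_unique {k j n : ℕ} {τ : Equiv.Perm (Fin k)} {b : Fin k → ℕ} {μ : Fin j → ℕ}
    {σ σ' : Equiv.Perm (Fin n)} {a a' : Fin n → ℕ} {e e' : Fin k ⊕ Fin j ≃ Fin n}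
    (h : Rl τ b μ σ a e) (h' : Rl τ b μ σ' a' e') (hτ : ∀ i, τ i ≠ i)
    (hc : Cmp σ a) (hc' : Cmp σ' a') : σ = σ' ∧ a = a' := by
  obtain rfl := h.e_unique h' hτ hc hc'
  constructor
  · ext x
    obtain ⟨z, rfl⟩ := e.surjective x
    rcases z with z | z
    · rw [h.sl, h'.sl]
    · rw [h.sr, h'.sr]
  · ext x
    obtain ⟨z, rfl⟩ := e.surjective x
    rcases z with z | z
    · rw [h.al, h'.al]
    · rw [h.ar, h'.ar]

lemma Rl.exists_σ {k j n : ℕ} (hn : k + j = n) (τ : Equiv.Perm (Fin k)) (b : Fin k → ℕ)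
    (μ : Fin j → ℕ) (hτ : ∀ i, τ i ≠ i) (hc : Cmp τ b) (hμ : Antitone μ) :
    ∃ (σ : Equiv.Perm (Fin n)) (a : Fin n → ℕ) (e : Fin k ⊕ Fin j ≃ Fin n),
      Rl τ b μ σ a e ∧ Cmp σ a := by
  obtain ⟨e, he⟩ := exists_sort (skey τ b μ) (skey_inj τ hτ b μ) n (by simp [hn])
  have ml : StrictMono (fun x => e (Sum.inl x)) := by
    intro x y hxy
    simp only [he, skey_lt]
    exact hc.key hxy
  have mr : StrictMono (fun x => e (Sum.inr x)) := by
    intro x y hxy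
    simp only [he, skey_lt]
    have := hμ hxy.le
    have h2 : (x : ℕ) < y := hxy
    simp only [klt, sv, st, si, Sum.elim_inr]
    rcases this.lt_or_eq with h3 | h3
    · exact Or.inl h3
    · exact Or.inr ⟨h3.symm, Or.inr ⟨trivial, h2⟩⟩
  have hr : Rl τ b μ (e.symm.trans ((Equiv.sumCongr τ (Equiv.refl _)).trans e))
      (sv b μ ∘ e.symm) e := by
    refine ⟨ml, mr, ?_, ?_, ?_, ?_⟩ <;> intro x <;> simp [sv]
  refine ⟨_, _, e, hr, ?_⟩
  intro x y hxy
  obtain ⟨z, rfl⟩ := e.surjective x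
  obtain ⟨z', rfl⟩ := e.surjective y
  have h1 := (skey_lt _ _ _ _ _).1 ((he _ _).1 hxy)
  constructor
  · simp only [Function.comp, Equiv.symm_apply_apply]
    unfold klt at h1
    omega
  · intro h2
    simp only [Function.comp, Equiv.symm_apply_apply] at h2
    have h3 : st τ z ≤ st τ z' := by unfold klt at h1; omega
    rcases z with z | z <;> rcases z' with z' | z'
    · rw [hr.sl, hr.sl]
      exact ml ((hc _ _ (ml.lt_iff_lt.1 hxy)).2 h2)
    · rw [hr.sl, hr.sr]
      refine lt_trans (ml ?_) hxy
      have := hτ z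
      simp only [st, typ, Sum.elim_inl, Sum.elim_inr] at h3
      grind
    · rw [hr.sl, hr.sr]
      refine lt_trans hxy (ml ?_)
      have := hτ z'
      simp only [st, typ, Sum.elim_inl, Sum.elim_inr] at h3
      grind
    · rw [hr.sr, hr.sr]
      exact hxy

lemma Rl.card {k j n : ℕ} {τ : Equiv.Perm (Fin k)} {b : Fin k → ℕ} {μ : Fin j → ℕ}
    {σ : Equiv.Perm (Fin n)} {a : Fin n → ℕ} {e : Fin k ⊕ Fin j ≃ Fin n}
    (h : Rl τ b μ σ a e) (hτ : ∀ i, τ i ≠ i) :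
    Set.range (fun x => e (Sum.inl x)) = {x | σ x ≠ x} ∧
    Set.range (fun x => e (Sum.inr x)) = {x | σ x = x} := by
  have h1 : ∀ x, σ (e (Sum.inl x)) ≠ e (Sum.inl x) := by
    intro x hx
    rw [h.sl] at hx
    exact hτ x (by simpa using hx)
  constructor
  · ext x
    constructor
    · rintro ⟨y, rfl⟩; exact h1 y
    · intro hx
      obtain ⟨z, rfl⟩ := e.surjective x
      rcases z with z | z
      · exact ⟨z, rfl⟩
      · exact absurd (h.sr z) hx
  · ext x
    constructor
    · rintro ⟨y, rfl⟩; exact h.sr y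
    · intro hx
      obtain ⟨z, rfl⟩ := e.surjective x
      rcases z with z | z
      · exact absurd hx (h1 z)
      · exact ⟨z, rfl⟩

lemma Rl.τ_unique {k j n : ℕ} {τ τ' : Equiv.Perm (Fin k)} {b b' : Fin k → ℕ} {μ μ' : Fin j → ℕ}
    {σ : Equiv.Perm (Fin n)} {a : Fin n → ℕ} {e e' : Fin k ⊕ Fin j ≃ Fin n}
    (h : Rl τ b μ σ a e) (h' : Rl τ' b' μ' σ a e') (hτ : ∀ i, τ i ≠ i) (hτ' : ∀ i, τ' i ≠ i) :
    τ = τ' ∧ b = b' ∧ μ = μ' := by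
  have e1 := (StrictMono.range_inj h.ml h'.ml).1 ((h.card hτ).1.trans (h'.card hτ').1.symm)
  have e2 := (StrictMono.range_inj h.mr h'.mr).1 ((h.card hτ).2.trans (h'.card hτ').2.symm)
  have e1 := congrFun e1
  have e2 := congrFun e2
  refine ⟨?_, ?_, ?_⟩
  · apply Equiv.ext; intro x
    have h1 := h.sl x
    rw [e1, h'.sl, ← e1] at h1
    simpa using h1.symm
  · ext x; rw [← h.al, ← h'.al, e1]
  · ext x; rw [← h.ar, ← h'.ar, e2]

lemma Rl.exists_τ {k j n : ℕ} (hn : k + j = n) (σ : Equiv.Perm (Fin n)) (a : Fin n → ℕ)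
    (hc : Cmp σ a) (hk : Fintype.card {x // σ x ≠ x} = k) :
    ∃ (τ : Equiv.Perm (Fin k)) (b : Fin k → ℕ) (μ : Fin j → ℕ) (e : Fin k ⊕ Fin j ≃ Fin n),
      Rl τ b μ σ a e ∧ Cmp τ b ∧ (∀ i, τ i ≠ i) ∧ Antitone μ := by
  have hj : Fintype.card {x // ¬ σ x ≠ x} = j := by
    rw [Fintype.card_subtype_compl, hk]; simp; omega
  let i1 := Fintype.orderIsoFinOfCardEq {x // σ x ≠ x} hk
  let i2 := Fintype.orderIsoFinOfCardEq {x // ¬ σ x ≠ x} hj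
  let s : Equiv.Perm {x // σ x ≠ x} := σ.subtypePerm (by intro x; simp)
  let τ : Equiv.Perm (Fin k) := i1.toEquiv.trans (s.trans i1.symm.toEquiv)
  let e : Fin k ⊕ Fin j ≃ Fin n :=
    (Equiv.sumCongr i1.toEquiv i2.toEquiv).trans (Equiv.sumCompl (fun x => σ x ≠ x))
  have el : ∀ x, e (Sum.inl x) = (i1 x : Fin n) := fun x => by simp [e]
  have er : ∀ x, e (Sum.inr x) = (i2 x : Fin n) := fun x => by simp [e]
  have et : ∀ x, (i1 (τ x) : Fin n) = σ (i1 x) := fun x => by simp [τ, s]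
  refine ⟨τ, fun x => a (i1 x), fun x => a (i2 x), e, ⟨?_, ?_, ?_, ?_, ?_, ?_⟩, ?_, ?_, ?_⟩
  · intro x y hxy; simp only [el]; exact i1.strictMono hxy
  · intro x y hxy; simp only [er]; exact i2.strictMono hxy
  · intro x; rw [el, el, et]
  · intro x; rw [er]; exact not_not.1 (i2 x).2
  · intro x; rw [el]
  · intro x; rw [er]
  · intro x y hxy
    have h1 : (i1 x : Fin n) < i1 y := i1.strictMono hxy
    refine ⟨(hc _ _ h1).1, fun h => ?_⟩
    have h2 := (hc _ _ h1).2 h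
    rw [← et, ← et] at h2
    exact i1.lt_iff_lt.1 h2
  · intro x hx
    have := et x
    rw [hx] at this
    exact (i1 x).2 this.symm
  · intro x y hxy
    exact hc.anti (i2.monotone hxy)

lemma equiv_of_rel {R L : Type*} (P : R → L → Prop) (h1 : ∀ r, ∃! l, P r l)
    (h2 : ∀ l, ∃! r, P r l) : ∃ e : R ≃ L, ∀ r, P r (e r) := by
  choose f hf hf' using h1
  choose g hg hg' using h2
  exact ⟨⟨f, g, fun r => (hg' _ _ (hf r)).symm, fun l => (hf' _ _ (hg l)).symm⟩, hf⟩

open scoped ENNReal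

lemma lemC (q : ℝ≥0∞) (k j n : ℕ) (hn : k + j = n) :
    ∑' p : {p : Equiv.Perm (Fin n) × (Fin n → ℕ) //
        Cmp p.1 p.2 ∧ Fintype.card {x // p.1 x ≠ x} = k}, q ^ (∑ i, p.1.2 i)
    = (∑' p : {p : Equiv.Perm (Fin k) × (Fin k → ℕ) //
        Cmp p.1 p.2 ∧ ∀ i, p.1 i ≠ i}, q ^ (∑ i, p.1.2 i))
      * ∑' μ : {μ : Fin j → ℕ // Antitone μ}, q ^ (∑ i, μ.1 i) := by
  obtain ⟨E, hE⟩ := equiv_of_rel (R := {p : Equiv.Perm (Fin k) × (Fin k → ℕ) //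
        Cmp p.1 p.2 ∧ ∀ i, p.1 i ≠ i} × {μ : Fin j → ℕ // Antitone μ})
      (L := {p : Equiv.Perm (Fin n) × (Fin n → ℕ) //
        Cmp p.1 p.2 ∧ Fintype.card {x // p.1 x ≠ x} = k})
      (fun r l => ∃ e, Rl r.1.1.1 r.1.1.2 r.2.1 l.1.1 l.1.2 e) (by
    rintro ⟨⟨⟨τ, b⟩, h1, h2⟩, ⟨μ, h3⟩⟩
    obtain ⟨σ, a, e, h, hc⟩ := Rl.exists_σ hn τ b μ h2 h1 h3
    refine ⟨⟨⟨σ, a⟩, hc, ?_⟩, ⟨e, h⟩, ?_⟩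
    · have := (h.card h2).1
      have h5 := Set.card_range_of_injective h.ml.injective
      simp only [Fintype.card_fin] at h5
      rw [← h5]
      simp only [← Nat.card_eq_fintype_card]
      rw [this]
      rfl
    · rintro ⟨⟨σ', a'⟩, hc', _⟩ ⟨e', h'⟩
      obtain ⟨rfl, rfl⟩ := h.σa_unique h' h2 hc hc'
      rfl) (by
    rintro ⟨⟨σ, a⟩, hc, hk⟩
    obtain ⟨τ, b, μ, e, h, h1, h2, h3⟩ := Rl.exists_τ hn σ a hc hk
    refine ⟨⟨⟨⟨τ, b⟩, h1, h2⟩, ⟨μ, h3⟩⟩, ⟨e, h⟩, ?_⟩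
    rintro ⟨⟨⟨τ', b'⟩, h1', h2'⟩, ⟨μ', h3'⟩⟩ ⟨e', h'⟩
    obtain ⟨rfl, rfl, rfl⟩ := h.τ_unique h' h2 h2'
    rfl)
  rw [← E.tsum_eq, ENNReal.tsum_prod', ← ENNReal.tsum_mul_right]
  refine tsum_congr fun x => ?_
  rw [← ENNReal.tsum_mul_left]
  refine tsum_congr fun y => ?_
  obtain ⟨e, h⟩ := hE (x, y)
  rw [← pow_add]
  congr 1
  rw [← e.sum_comp, Fintype.sum_sum_type]
  simp only [h.al, h.ar]

lemma tsum_pi_prod (n : ℕ) (f : Fin n → ℕ → ℝ≥0∞) :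
    ∑' c : Fin n → ℕ, ∏ i, f i (c i) = ∏ i, ∑' m, f i m := by
  induction n with
  | zero => simp
  | succ n ih =>
    rw [← (Fin.consEquiv (fun _ => ℕ)).tsum_eq, ENNReal.tsum_prod', Fin.prod_univ_succ,
      ← ih, ← ENNReal.tsum_mul_right]
    refine tsum_congr fun x => ?_
    rw [← ENNReal.tsum_mul_left]
    refine tsum_congr fun y => ?_
    rw [Fin.prod_univ_succ]
    simp [Fin.consEquiv]

def xt {n : ℕ} (a : Fin n → ℕ) (i : ℕ) : ℕ := if h : i < n then a ⟨i, h⟩ else 0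

def dd (n : ℕ) (σ : Equiv.Perm (Fin n)) (i : ℕ) : ℕ :=
  if i + 1 < n ∧ pword n σ (i + 1) < pword n σ i then 1 else 0

lemma xt_val {n : ℕ} (a : Fin n → ℕ) (i : Fin n) : xt a i = a i := by
  simp [xt]

lemma maj_dd (n : ℕ) (σ : Equiv.Perm (Fin n)) :
    majStat n (pword n σ) = ∑ i : Fin n, ((i : ℕ) + 1) * dd n σ i := by
  rw [Fin.sum_univ_eq_sum_range (fun i => (i + 1) * dd n σ i)]
  unfold majStat
  rcases n with _ | n
  · simp
  · rw [Finset.sum_range_succ]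
    have : dd (n + 1) σ n = 0 := by simp [dd]
    rw [this]
    simp only [Nat.add_sub_cancel, mul_zero, add_zero]
    refine Finset.sum_congr rfl fun i hi => ?_
    have : i < n := Finset.mem_range.1 hi
    simp [dd, this]

lemma adj_cmp {n : ℕ} (σ : Equiv.Perm (Fin n)) (a : Fin n → ℕ)
    (h : ∀ i, i + 1 < n → xt a (i + 1) + dd n σ i ≤ xt a i) : Cmp σ a := by
  have main : ∀ x y : ℕ, x < y → y < n → xt a y ≤ xt a x ∧
      (xt a x = xt a y → pword n σ x < pword n σ y) := by
    intro x y hxy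
    have step : ∀ i, i + 1 < n → xt a (i + 1) ≤ xt a i ∧
        (xt a i = xt a (i + 1) → pword n σ i < pword n σ (i + 1)) := by
      intro i hi
      have h1 := h i hi
      refine ⟨by omega, fun he => ?_⟩
      have hd : dd n σ i = 0 := by omega
      have h2 : ¬ pword n σ (i + 1) < pword n σ i := by
        intro hc
        simp [dd, hi, hc] at hd
      have h3 : pword n σ (i + 1) ≠ pword n σ i := by
        intro hc
        have hi' : i < n := by omega
        simp [pword, hi, hi', Fin.val_inj] at hc
      omega
    induction y, hxy using Nat.le_induction with
    | base => intro hy; exact step x hy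
    | succ y hy ih =>
      intro hy2
      have h1 := ih (by omega)
      have h2 := step y hy2
      refine ⟨by omega, fun he => ?_⟩
      have := h1.2 (by omega)
      have := h2.2 (by omega)
      omega
  intro x y hxy
  have := main x y hxy y.2
  rw [xt_val, xt_val] at this
  simpa [pword] using this

lemma cmp_adj {n : ℕ} (σ : Equiv.Perm (Fin n)) (a : Fin n → ℕ) (h : Cmp σ a) (i : ℕ)
    (hi : i < n) : xt a (i + 1) + dd n σ i ≤ xt a i := by
  by_cases hi1 : i + 1 < n
  · have h1 := h ⟨i, hi⟩ ⟨i + 1, hi1⟩ (by simp)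
    simp only [xt, hi, hi1, dif_pos, dd, pword, true_and]
    split_ifs with h2
    · have h3 : ¬ σ ⟨i, hi⟩ < σ ⟨i + 1, hi1⟩ := by
        intro hc
        have : (σ ⟨i, hi⟩ : ℕ) < σ ⟨i + 1, hi1⟩ := hc
        omega
      have := h1.1
      have : a ⟨i, hi⟩ ≠ a ⟨i + 1, hi1⟩ := fun hh => h3 (h1.2 hh)
      omega
    · simpa using h1.1
  · simp [xt, dd, hi1]

lemma lemA (q : ℝ≥0∞) (n : ℕ) (σ : Equiv.Perm (Fin n)) :
    ∑' a : {a : Fin n → ℕ // Cmp σ a}, q ^ (∑ i, a.1 i)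
      = q ^ majStat n (pword n σ) * ∏ i ∈ Finset.range n, (1 - q ^ (i + 1))⁻¹ := by
  obtain ⟨E, hE⟩ := equiv_of_rel (R := Fin n → ℕ) (L := {a : Fin n → ℕ // Cmp σ a})
    (fun c a => ∀ i, i < n → xt a.1 i = xt a.1 (i + 1) + (xt c i + dd n σ i)) (by
      intro c
      let A : ℕ → ℕ := fun i => ∑ j ∈ Finset.Ico i n, (xt c j + dd n σ j)
      have hA : ∀ i, xt (fun x : Fin n => A x) i = A i := by
        intro i
        by_cases hi : i < n
        · simp [xt, hi]
        · simp [xt, hi, A, Finset.Ico_eq_empty_of_le (not_lt.1 hi)]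
      have hs : ∀ i, i < n → A i = A (i + 1) + (xt c i + dd n σ i) := by
        intro i hi
        simp only [A]
        rw [Finset.sum_eq_sum_Ico_succ_bot hi]
        omega
      refine ⟨⟨fun x => A x, adj_cmp _ _ ?_⟩, ?_, ?_⟩
      · intro i hi
        rw [hA, hA, hs i (by omega)]
        omega
      · intro i hi
        simp only [hA]
        exact hs i hi
      · rintro ⟨a, ha⟩ h
        apply Subtype.ext
        have : ∀ m i, i + m = n → xt a i = A i := by
          intro m
          induction m with
          | zero => intro i hi; simp [xt, A, show ¬ i < n by omega,
              Finset.Ico_eq_empty_of_le (show n ≤ i by omega)]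
          | succ m ih =>
            intro i hi
            rw [h i (by omega), hs i (by omega), ih (i + 1) (by omega)]
        ext x
        change a x = A x
        rw [← xt_val a x, this (n - x) x (by omega)]) (by
      rintro ⟨a, ha⟩
      refine ⟨fun x => xt a x - xt a (x + 1) - dd n σ x, ?_, ?_⟩
      · intro i hi
        have := cmp_adj σ a ha i hi
        have e : xt (fun x : Fin n => xt a x - xt a (x + 1) - dd n σ x) i
          = xt a i - xt a (i + 1) - dd n σ i := by
          simp [xt, hi]
        simp only [e]
        omega
      · intro c hc
        ext x
        have := hc x x.2
        rw [xt_val c] at this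
        simp only at this ⊢
        omega)
  have hw : ∀ c, ∑ i, (E c).1 i = ∑ i : Fin n, ((i : ℕ) + 1) * (c i + dd n σ i) := by
    intro c
    have h := hE c
    have : ∀ m, m ≤ n → ∑ i ∈ Finset.range m, xt (E c).1 i
        = ∑ i ∈ Finset.range m, (i + 1) * (xt c i + dd n σ i) + m * xt (E c).1 m := by
      intro m
      induction m with
      | zero => simp
      | succ m ih =>
        intro hm
        rw [Finset.sum_range_succ, Finset.sum_range_succ, ih (by omega), h m (by omega)]
        ring
    have h2 := this n le_rfl
    have h3 : xt (E c).1 n = 0 := by simp [xt]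
    rw [h3, ← Fin.sum_univ_eq_sum_range, ← Fin.sum_univ_eq_sum_range
      (fun i => (i + 1) * (xt c i + dd n σ i))] at h2
    simpa [xt_val] using h2
  rw [← E.tsum_eq]
  simp only [hw]
  have : ∀ c : Fin n → ℕ, q ^ (∑ i : Fin n, ((i : ℕ) + 1) * (c i + dd n σ i))
      = ∏ i : Fin n, (fun (i : Fin n) m => q ^ (((i : ℕ) + 1) * (m + dd n σ i))) i (c i) := by
    intro c
    rw [Finset.prod_pow_eq_pow_sum]
  simp only [this]
  rw [tsum_pi_prod n (fun (i : Fin n) m => q ^ (((i : ℕ) + 1) * (m + dd n σ i))), maj_dd,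
    ← Finset.prod_pow_eq_pow_sum, ← Fin.prod_univ_eq_prod_range (fun i => (1 - q ^ (i + 1))⁻¹),
    ← Finset.prod_mul_distrib]
  refine Finset.prod_congr rfl fun i _ => ?_
  rw [← ENNReal.tsum_geometric, ← ENNReal.tsum_mul_left]
  refine tsum_congr fun m => ?_
  rw [← pow_mul, ← pow_add]
  congr 1
  ring

lemma lemB (q : ℝ≥0∞) (n : ℕ) :
    ∑' p : {p : Equiv.Perm (Fin n) × (Fin n → ℕ) // Cmp p.1 p.2}, q ^ (∑ i, p.1.2 i)
      = ((1 - q)⁻¹) ^ n := by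
  have h0 := tsum_pi_prod n (fun _ m => q ^ m)
  simp only [ENNReal.tsum_geometric, Finset.prod_const, Finset.card_univ, Fintype.card_fin,
    Finset.prod_pow_eq_pow_sum] at h0
  rw [← h0]
  have key : ∀ (σ : Equiv.Perm (Fin n)) (f : Fin n → ℕ),
      Cmp σ (f ∘ σ) ↔ σ = Tuple.sort (fun x => OrderDual.toDual (f x)) := by
    intro σ f
    rw [Tuple.eq_sort_iff]
    constructor
    · intro h
      refine ⟨?_, ?_⟩
      · intro x y hxy
        exact OrderDual.toDual_le_toDual.2 (h.anti hxy)
      · intro x y hxy he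
        exact (h x y hxy).2 (OrderDual.toDual.injective he)
    · rintro ⟨h1, h2⟩ x y hxy
      refine ⟨OrderDual.toDual_le_toDual.1 (h1 hxy.le), fun he => h2 x y hxy ?_⟩
      simpa using he
  let E : {p : Equiv.Perm (Fin n) × (Fin n → ℕ) // Cmp p.1 p.2} ≃ (Fin n → ℕ) :=
    { toFun := fun p => p.1.2 ∘ p.1.1.symm
      invFun := fun f => ⟨(Tuple.sort (fun x => OrderDual.toDual (f x)),
        f ∘ Tuple.sort (fun x => OrderDual.toDual (f x))), (key _ _).2 rfl⟩
      left_inv := by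
        rintro ⟨⟨σ, a⟩, h⟩
        have h1 : (a ∘ σ.symm) ∘ σ = a := by ext x; simp
        have h2 := (key σ (a ∘ σ.symm)).1 (by rw [h1]; exact h)
        apply Subtype.ext
        simp only
        rw [← h2, h1]
      right_inv := by
        intro f
        ext x
        simp }
  rw [← E.tsum_eq]
  refine tsum_congr fun p => ?_
  congr 1
  exact (p.1.1.symm.sum_comp p.1.2).symm

lemma lemD (q : ℝ≥0∞) (k : ℕ) :
    ∑' p : {p : Equiv.Perm (Fin k) × (Fin k → ℕ) // Cmp p.1 p.2 ∧ ∀ i, p.1 i ≠ i},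
      q ^ (∑ i, p.1.2 i)
    = (∑ σ ∈ Finset.univ.filter (fun σ : Equiv.Perm (Fin k) => ∀ i, σ i ≠ i),
        q ^ majStat k (pword k σ)) * ∏ i ∈ Finset.range k, (1 - q ^ (i + 1))⁻¹ := by
  have h1 := tsum_subtype {p : Equiv.Perm (Fin k) × (Fin k → ℕ) | Cmp p.1 p.2 ∧ ∀ i, p.1 i ≠ i}
    (fun p => q ^ (∑ i, p.2 i))
  refine h1.trans ?_
  rw [ENNReal.tsum_prod', tsum_fintype, Finset.sum_filter, Finset.sum_mul]
  refine Finset.sum_congr rfl fun σ _ => ?_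
  split_ifs with hσ
  · rw [← lemA]
    refine Eq.trans ?_ (tsum_subtype {a : Fin k → ℕ | Cmp σ a} (fun a => q ^ (∑ i, a i))).symm
    refine tsum_congr fun a => ?_
    simp [Set.indicator, hσ]
  · simp only [zero_mul, ENNReal.tsum_eq_zero]
    intro a
    apply Set.indicator_of_notMem
    exact fun hh => hσ hh.2

lemma lemM (q : ℝ≥0∞) (j : ℕ) :
    ∑' μ : {μ : Fin j → ℕ // Antitone μ}, q ^ (∑ i, μ.1 i)
      = ∏ i ∈ Finset.range j, (1 - q ^ (i + 1))⁻¹ := by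
  have h1 : ∀ μ : Fin j → ℕ, Antitone μ ↔ Cmp 1 μ := by
    intro μ
    constructor
    · intro h x y hxy
      exact ⟨h hxy.le, fun _ => hxy⟩
    · intro h x y hxy
      exact h.anti hxy
  have h2 := lemA q j 1
  have h3 : majStat j (pword j 1) = 0 := by
    unfold majStat
    refine Finset.sum_eq_zero fun i hi => ?_
    have := Finset.mem_range.1 hi
    have e1 : i < j := by omega
    have e2 : i + 1 < j := by omega
    simp [pword, e1, e2]
  rw [h3, pow_zero, one_mul] at h2
  rw [← h2]
  exact (Equiv.subtypeEquivRight h1).tsum_eq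
    (fun a : {a : Fin j → ℕ // Cmp 1 a} => q ^ (∑ i, a.1 i))

lemma lemE (q : ℝ≥0∞) (n : ℕ) :
    ((1 - q)⁻¹) ^ n = ∑ k ∈ Finset.range (n + 1),
      (∑ σ ∈ Finset.univ.filter (fun σ : Equiv.Perm (Fin k) => ∀ i, σ i ≠ i),
        q ^ majStat k (pword k σ)) * (∏ i ∈ Finset.range k, (1 - q ^ (i + 1))⁻¹) *
        ∏ i ∈ Finset.range (n - k), (1 - q ^ (i + 1))⁻¹ := by
  have h1 : ∀ k ∈ Finset.range (n + 1),
      (∑ σ ∈ Finset.univ.filter (fun σ : Equiv.Perm (Fin k) => ∀ i, σ i ≠ i),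
        q ^ majStat k (pword k σ)) * (∏ i ∈ Finset.range k, (1 - q ^ (i + 1))⁻¹) *
        ∏ i ∈ Finset.range (n - k), (1 - q ^ (i + 1))⁻¹ =
      ∑' p, Set.indicator {p : Equiv.Perm (Fin n) × (Fin n → ℕ) |
        Cmp p.1 p.2 ∧ Fintype.card {x // p.1 x ≠ x} = k} (fun p => q ^ (∑ i, p.2 i)) p := by
    intro k hk
    have hk := Finset.mem_range.1 hk
    rw [← lemD, ← lemM, ← lemC q k (n - k) n (by omega)]
    exact tsum_subtype {p : Equiv.Perm (Fin n) × (Fin n → ℕ) |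
        Cmp p.1 p.2 ∧ Fintype.card {x // p.1 x ≠ x} = k} (fun p => q ^ (∑ i, p.2 i))
  rw [Finset.sum_congr rfl h1, ← Summable.tsum_finsetSum (fun _ _ => ENNReal.summable), ← lemB]
  refine (tsum_subtype {p : Equiv.Perm (Fin n) × (Fin n → ℕ) | Cmp p.1 p.2}
    (fun p => q ^ (∑ i, p.2 i))).trans ?_
  refine tsum_congr fun p => ?_
  have hc : Fintype.card {x // p.1 x ≠ x} ∈ Finset.range (n + 1) := by
    have := Fintype.card_subtype_le (fun x => p.1 x ≠ x)
    rw [Fintype.card_fin] at this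
    exact Finset.mem_range.2 (by omega)
  rw [Finset.sum_eq_single_of_mem _ hc]
  · simp [Set.indicator]
  · intro k _ hk
    apply Set.indicator_of_notMem
    exact fun hh => hk hh.2.symm

lemma map_qq {R S : Type*} [CommRing R] [CommRing S] (f : R →+* S) (q : R) (m : ℕ) :
    f (qq q m) = qq (f q) m := by
  simp [qq]

lemma map_Dmaj {R S : Type*} [CommRing R] [CommRing S] (f : R →+* S) (q : R) (m : ℕ) :
    f (Dmaj q m) = Dmaj (f q) m := by
  simp [Dmaj]

lemma real_id (q : ℝ) (h0 : 0 < q) (h1 : q < 1) (n : ℕ) :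
    1 / (1 - q) ^ n = ∑ k ∈ Finset.range (n + 1), Dmaj q k / (qq q k * qq q (n - k)) := by
  have h := congrArg ENNReal.toReal (lemE (ENNReal.ofReal q) n)
  have hp : ∀ i : ℕ, ENNReal.ofReal q ^ i = ENNReal.ofReal (q ^ i) :=
    fun i => (ENNReal.ofReal_pow h0.le i).symm
  have hpos : ∀ i : ℕ, 0 < 1 - q ^ (i + 1) :=
    fun i => sub_pos.2 (pow_lt_one₀ h0.le h1 (by omega))
  have hs : ∀ i : ℕ, (1 - ENNReal.ofReal q ^ (i + 1))⁻¹ = ENNReal.ofReal ((1 - q ^ (i + 1))⁻¹) := by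
    intro i
    rw [hp, ← ENNReal.ofReal_one, ← ENNReal.ofReal_sub _ (by positivity),
      ENNReal.ofReal_inv_of_pos (hpos i)]
  have hs0 := hs 0
  rw [zero_add, pow_one, pow_one] at hs0
  simp only [hs, hs0] at h
  rw [ENNReal.toReal_sum] at h
  · have h10 : (0 : ℝ) ≤ (1 - q)⁻¹ := inv_nonneg.2 (by linarith)
    have hi : ∀ i : ℕ, (0 : ℝ) ≤ (1 - q ^ (i + 1))⁻¹ := fun i => inv_nonneg.2 (hpos i).le
    rw [ENNReal.toReal_pow, ENNReal.toReal_ofReal h10, inv_pow] at h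
    rw [one_div, h]
    refine Finset.sum_congr rfl fun k _ => ?_
    rw [ENNReal.toReal_mul, ENNReal.toReal_mul, ENNReal.toReal_prod, ENNReal.toReal_prod,
      ENNReal.toReal_sum]
    · simp only [ENNReal.toReal_ofReal (hi _), hp, Finset.prod_inv_distrib,
        ENNReal.toReal_ofReal (pow_nonneg h0.le _)]
      unfold Dmaj qq
      rw [div_eq_mul_inv, mul_inv, mul_assoc]
    · intro σ _
      rw [hp]; exact ENNReal.ofReal_ne_top
  · intro k _
    refine ENNReal.mul_ne_top (ENNReal.mul_ne_top ?_ ?_) ?_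
    · refine ENNReal.sum_ne_top.2 fun σ _ => ?_
      rw [hp]; exact ENNReal.ofReal_ne_top
    · exact ENNReal.prod_ne_top fun i _ => ENNReal.ofReal_ne_top
    · exact ENNReal.prod_ne_top fun i _ => ENNReal.ofReal_ne_top

lemma clear_den {F : Type*} [Field F] (q : F) (n : ℕ) (h1 : 1 - q ≠ 0)
    (h : ∀ m ≤ n, qq q m ≠ 0) :
    (1 / (1 - q) ^ n = ∑ k ∈ Finset.range (n + 1), Dmaj q k / (qq q k * qq q (n - k))) ↔
    ∏ k ∈ Finset.range (n + 1), (qq q k * qq q (n - k)) = (1 - q) ^ n *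
      ∑ k ∈ Finset.range (n + 1), Dmaj q k *
        ∏ j ∈ (Finset.range (n + 1)).erase k, (qq q j * qq q (n - j)) := by
  have hQ : ∀ k ∈ Finset.range (n + 1), qq q k * qq q (n - k) ≠ 0 := fun k hk =>
    mul_ne_zero (h k (by have := Finset.mem_range.1 hk; omega)) (h _ (by omega))
  have hP : ∏ k ∈ Finset.range (n + 1), (qq q k * qq q (n - k)) ≠ 0 :=
    Finset.prod_ne_zero_iff.2 hQ
  have e : ∑ k ∈ Finset.range (n + 1), Dmaj q k *
        ∏ j ∈ (Finset.range (n + 1)).erase k, (qq q j * qq q (n - j))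
      = (∏ k ∈ Finset.range (n + 1), (qq q k * qq q (n - k))) *
        ∑ k ∈ Finset.range (n + 1), Dmaj q k / (qq q k * qq q (n - k)) := by
    rw [Finset.mul_sum]
    refine Finset.sum_congr rfl fun k hk => ?_
    rw [← Finset.mul_prod_erase _ _ hk, mul_div_assoc', eq_div_iff (hQ k hk)]
    ring
  rw [e]
  generalize ∑ k ∈ Finset.range (n + 1), Dmaj q k / (qq q k * qq q (n - k)) = S
  generalize ∏ k ∈ Finset.range (n + 1), (qq q k * qq q (n - k)) = P at *
  rw [div_eq_iff (pow_ne_zero n h1)]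
  constructor
  · intro hh
    linear_combination P * hh
  · intro hh
    apply mul_left_cancel₀ hP
    linear_combination hh

lemma poly_id (n : ℕ) :
    ∏ k ∈ Finset.range (n + 1), (qq (Polynomial.X : Polynomial ℤ) k * qq Polynomial.X (n - k))
      = (1 - Polynomial.X) ^ n *
      ∑ k ∈ Finset.range (n + 1), Dmaj Polynomial.X k *
        ∏ j ∈ (Finset.range (n + 1)).erase k, (qq Polynomial.X j * qq Polynomial.X (n - j)) := by
  apply Polynomial.map_injective (Int.castRingHom ℝ) Int.cast_injective
  apply Polynomial.eq_of_infinite_eval_eq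
  refine Set.Infinite.mono ?_ (Set.Ioo_infinite (show (0 : ℝ) < 1 by norm_num))
  rintro q ⟨h0, h1⟩
  have hq : ∀ m ≤ n, qq q m ≠ 0 := by
    intro m _
    refine Finset.prod_ne_zero_iff.2 fun i _ => ?_
    exact (sub_pos.2 (pow_lt_one₀ h0.le h1 (by omega))).ne'
  have h := (clear_den q n (by linarith) hq).1 (real_id q h0 h1 n)
  simp only [Set.mem_ofPred_eq, Polynomial.eval_map]
  have e1 := fun m => map_qq (Polynomial.eval₂RingHom (Int.castRingHom ℝ) q) Polynomial.X m
  have e2 := fun m => map_Dmaj (Polynomial.eval₂RingHom (Int.castRingHom ℝ) q) Polynomial.X m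
  change Polynomial.eval₂RingHom (Int.castRingHom ℝ) q _
    = Polynomial.eval₂RingHom (Int.castRingHom ℝ) q _
  simp only [map_prod, map_mul, map_sum, e1, e2, map_pow, map_sub, map_one]
  simpa using h

theorem stmt16 (K : Type*) [Field K] (q : K) :
    Dmaj q 0 = 1 ∧
    ∀ n : ℕ, 1 ≤ n → ((1 : K) - q ≠ 0) → (∀ m ≤ n, qq q m ≠ 0) →
      qq q n / (1 - q) ^ n
        = ∑ k ∈ Finset.range (n + 1), (qq q n / (qq q k * qq q (n - k))) * Dmaj q k := by
  refine ⟨?_, ?_⟩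
  · simp [Dmaj, majStat]
  · intro n _ h1 h
    have hp := congrArg (Polynomial.eval₂RingHom (Int.castRingHom K) q) (poly_id n)
    have e1 := fun m => map_qq (Polynomial.eval₂RingHom (Int.castRingHom K) q) Polynomial.X m
    have e2 := fun m => map_Dmaj (Polynomial.eval₂RingHom (Int.castRingHom K) q) Polynomial.X m
    simp only [map_prod, map_mul, map_sum, e1, e2, map_pow, map_sub, map_one] at hp
    have hX : Polynomial.eval₂RingHom (Int.castRingHom K) q Polynomial.X = q := by simp
    rw [hX] at hp
    have hm := (clear_den q n h1 h).2 hp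
    rw [div_eq_mul_one_div, hm, Finset.mul_sum]
    refine Finset.sum_congr rfl fun k _ => ?_
    ring
end
end
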